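/- arXiv:math/0111196 — 2 statements merged into one kernel-verified Lean document; each statement's English description precedes it below -/
import Mathlib

section
/- Let a ≥ 2, k ≥ 1 and l ≥ 1 be integers, and write l = a·m + ε with integers m ≥ 0 and 0 ≤ ε ≤ a−1. If k ≥ 2 or ε ≥ 2, then the closed stratum Σ_{(a^k,1^l)}^{S^1} of the n-fold symmetric smash product (S^1)^{(n)}, where n = a·k + l and the partition (a^k,1^l) consists of k parts equal to a and l parts equal to 1, is contractible. -/
/-- Two `n`-tuples are related if one is a permutation of the other. -/
def permRel (n : ℕ) (X : Type) : (Fin n → X) → (Fin n → X) → Prop :=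
  fun x y => ∃ σ : Equiv.Perm (Fin n), x ∘ σ = y

/-- `Sym^n X`: the quotient of `X^n` by the permutation action of `S_n`,
with the quotient topology. -/
def SymQ (n : ℕ) (X : Type) [TopologicalSpace X] : Type :=
  Quot (permRel n X)

instance (n : ℕ) (X : Type) [TopologicalSpace X] : TopologicalSpace (SymQ n X) :=
  inferInstanceAs (TopologicalSpace (Quot _))

/-- The relation collapsing the set of multisets containing the basepoint. -/
def infRel (n : ℕ) (X : Type) [TopologicalSpace X] (star : X) :
    SymQ n X → SymQ n X → Prop :=
  fun p q => p = q ∨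
    ((∃ y : Fin n → X, p = Quot.mk _ y ∧ ∃ i, y i = star) ∧
     (∃ y : Fin n → X, q = Quot.mk _ y ∧ ∃ i, y i = star))

/-- `X^{(n)}`, the `n`-fold symmetric smash product: the quotient of `Sym^n X`
collapsing all multisets containing the basepoint to a single point. -/
def SymSmash (n : ℕ) (X : Type) [TopologicalSpace X] (star : X) : Type :=
  Quot (infRel n X star)

instance (n : ℕ) (X : Type) [TopologicalSpace X] (star : X) :
    TopologicalSpace (SymSmash n X star) :=
  inferInstanceAs (TopologicalSpace (Quot _))

/-- The canonical projection `X^n → X^{(n)}`. -/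
def symProj (n : ℕ) (X : Type) [TopologicalSpace X] (star : X) (y : Fin n → X) :
    SymSmash n X star :=
  Quot.mk _ (Quot.mk _ y)

/-- The closed stratum `Σ_λ^X ⊆ X^{(n)}` for a partition `λ` of `n` with `m` parts:
the image of the map `X^m → X^{(n)}` sending `(x_1,…,x_m)` to the class of the
multiset with `λ_i` copies of `x_i`. -/
def stratum (n m : ℕ) (lam : Fin m → ℕ) (X : Type) [TopologicalSpace X] (star : X) :
    Set (SymSmash n X star) :=
  {p | ∃ y : Fin n → X, p = symProj n X star y ∧
    ∃ x : Fin m → X, Multiset.map y Finset.univ.val =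
      (Finset.univ.val : Multiset (Fin m)).bind
        (fun i => Multiset.replicate (lam i) (x i))}

/-- The circle `S^1`, as the unit sphere in `ℝ²`. -/
abbrev Circle1 : Type := ↥(Metric.sphere (0 : EuclideanSpace ℝ (Fin 2)) 1)


open Topology

section SymSmashTopology

variable {n : ℕ} {X : Type}

theorem permRel_of_map_eq {y y' : Fin n → X}
    (h : Multiset.map y Finset.univ.val = Multiset.map y' Finset.univ.val) : permRel n X y y' := by
  classical
  have hcard : ∀ z, Nonempty ({i // y' i = z} ≃ {i // y i = z}) := fun z => by
    have := congrArg (Multiset.count z) h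
    rw [Multiset.count_map, Multiset.count_map] at this
    refine Fintype.card_eq.mp ?_
    rw [Fintype.card_subtype, Fintype.card_subtype]
    simpa only [Finset.card_def, Finset.filter_val, eq_comm] using this.symm
  let e := fun z => (hcard z).some
  refine ⟨(Equiv.sigmaFiberEquiv y').symm.trans
    ((Equiv.sigmaCongrRight e).trans (Equiv.sigmaFiberEquiv y)), funext fun i => ?_⟩
  exact (e (y' i) ⟨i, rfl⟩).2

variable {star : X}

/-- The invariant `∏ (c yᵢ - c star) * (t - c yᵢ)` of tuples, as a function of `t`,
together with its leading coefficient. -/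
def tupleInvariant (c : X → ℂ) (star : X) (y : Fin n → X) : ℂ × (ℂ → ℂ) :=
  (∏ i, (c (y i) - c star), fun t => ∏ i, ((c (y i) - c star) * (t - c (y i))))

theorem tupleInvariant_congr_perm (c : X → ℂ) (y y' : Fin n → X) (h : permRel n X y y') :
    tupleInvariant c star y = tupleInvariant c star y' := by
  obtain ⟨σ, rfl⟩ := h
  simp only [tupleInvariant, Function.comp_apply, Prod.mk.injEq]
  exact ⟨(Equiv.prod_comp σ fun i => c (y i) - c star).symm, funext fun t =>
    (Equiv.prod_comp σ fun i => (c (y i) - c star) * (t - c (y i))).symm⟩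

theorem tupleInvariant_of_star (c : X → ℂ) (y : Fin n → X) (h : ∃ i, y i = star) :
    tupleInvariant c star y = 0 := by
  obtain ⟨i, hi⟩ := h
  ext1
  · exact Finset.prod_eq_zero (Finset.mem_univ i) (by simp [hi])
  · funext t
    exact Finset.prod_eq_zero (Finset.mem_univ i) (by simp [hi])

theorem map_eq_or_star_of_tupleInvariant_eq {c : X → ℂ} (hc : Function.Injective c)
    {y y' : Fin n → X} (h : tupleInvariant c star y = tupleInvariant c star y') :
    Multiset.map y Finset.univ.val = Multiset.map y' Finset.univ.val ∨
      ((∃ i, y i = star) ∧ ∃ i, y' i = star) := by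
  have h1 : ∏ i, (c (y i) - c star) = ∏ i, (c (y' i) - c star) := congrArg Prod.fst h
  have h2 : ∀ t, ∏ i, ((c (y i) - c star) * (t - c (y i))) =
      ∏ i, ((c (y' i) - c star) * (t - c (y' i))) := fun t => congrFun (congrArg Prod.snd h) t
  have key : ∀ z : Fin n → X, ∏ i, (c (z i) - c star) = 0 ↔ ∃ i, z i = star := fun z => by
    simp [Finset.prod_eq_zero_iff, sub_eq_zero, hc.eq_iff]
  by_cases h0 : ∏ i, (c (y i) - c star) = 0
  · exact Or.inr ⟨(key y).mp h0, (key y').mp (h1 ▸ h0)⟩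
  · left
    have hpoly : ∏ i, (Polynomial.X - Polynomial.C (c (y i))) =
        ∏ i, (Polynomial.X - Polynomial.C (c (y' i))) := by
      refine Polynomial.funext fun t => ?_
      have := h2 t
      rw [Finset.prod_mul_distrib, Finset.prod_mul_distrib, ← h1] at this
      simpa [Polynomial.eval_prod] using mul_left_cancel₀ h0 this
    have hroots : ∀ z : Fin n → X, (∏ i, (Polynomial.X - Polynomial.C (c (z i)))).roots =
        Multiset.map c (Multiset.map z Finset.univ.val) := fun z => by
      rw [← Polynomial.roots_multiset_prod_X_sub_C (Multiset.map c (Multiset.map z _)),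
        Multiset.map_map, Multiset.map_map]
      rfl
    exact Multiset.map_injective hc (by rw [← hroots, ← hroots, hpoly])

variable [TopologicalSpace X]

theorem continuous_symProj : Continuous (symProj n X star) :=
  continuous_quot_mk.comp continuous_quot_mk

theorem symProj_eq_of_map_eq {y y' : Fin n → X}
    (h : Multiset.map y Finset.univ.val = Multiset.map y' Finset.univ.val) :
    symProj n X star y = symProj n X star y' :=
  congrArg (Quot.mk _) (Quot.sound (permRel_of_map_eq h))

theorem symProj_eq_of_star {y y' : Fin n → X} (h : ∃ i, y i = star) (h' : ∃ i, y' i = star) :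
    symProj n X star y = symProj n X star y' :=
  Quot.sound (Or.inr ⟨⟨y, rfl, h⟩, ⟨y', rfl, h'⟩⟩)

/-- The invariant `tupleInvariant`, descended to the symmetric smash product. -/
def smashInvariant (c : X → ℂ) (star : X) : SymSmash n X star → ℂ × (ℂ → ℂ) :=
  Quot.lift (Quot.lift (tupleInvariant c star) (tupleInvariant_congr_perm c)) (by
    rintro p q (rfl | ⟨⟨y, rfl, hy⟩, ⟨y', rfl, hy'⟩⟩)
    · rfl
    · exact (tupleInvariant_of_star c y hy).trans (tupleInvariant_of_star c y' hy').symm)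

theorem continuous_smashInvariant {c : X → ℂ} (hc : Continuous c) :
    Continuous (smashInvariant (n := n) c star) := by
  refine continuous_quot_lift _ (continuous_quot_lift _ ?_)
  unfold tupleInvariant
  fun_prop

theorem symProj_surjective : Function.Surjective (symProj n X star) := by
  rintro ⟨⟨y⟩⟩
  exact ⟨y, rfl⟩

theorem map_eq_or_star_of_symProj_eq {c : X → ℂ} (hc : Function.Injective c)
    {y y' : Fin n → X} (h : symProj n X star y = symProj n X star y') :
    Multiset.map y Finset.univ.val = Multiset.map y' Finset.univ.val ∨
      ((∃ i, y i = star) ∧ ∃ i, y' i = star) :=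
  map_eq_or_star_of_tupleInvariant_eq hc (congrArg (smashInvariant c star) h)

theorem t2Space_symSmash {c : X → ℂ} (hcont : Continuous c) (hc : Function.Injective c) :
    T2Space (SymSmash n X star) := by
  refine T2Space.of_injective_continuous (f := smashInvariant c star) ?_
    (continuous_smashInvariant hcont)
  intro p q h
  obtain ⟨y, rfl⟩ := symProj_surjective p
  obtain ⟨y', rfl⟩ := symProj_surjective q
  rcases map_eq_or_star_of_tupleInvariant_eq hc h with h | ⟨h, h'⟩
  · exact symProj_eq_of_map_eq h
  · exact symProj_eq_of_star h h'

end SymSmashTopology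

section CircleParametrization

/-- The identification of the circle with the unit complex numbers. -/
noncomputable def circleToComplex (x : Circle1) : ℂ :=
  Complex.orthonormalBasisOneI.repr.symm x

theorem continuous_circleToComplex : Continuous circleToComplex := by
  unfold circleToComplex
  fun_prop

theorem circleToComplex_injective : Function.Injective circleToComplex := fun _ _ h =>
  Subtype.ext (Complex.orthonormalBasisOneI.repr.symm.injective h)

/-- A continuous parametrization of the circle by `[0, 1]`, injective except that both end points
go to the base point. -/
structure IsLoopParam (star : Circle1) (E : ℝ → Circle1) : Prop where
  continuous : Continuous E
  zero : E 0 = star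
  one : E 1 = star
  surj : ∀ x, ∃ s ∈ Set.Icc (0 : ℝ) 1, E s = x
  ends : ∀ s ∈ Set.Icc (0 : ℝ) 1, E s = star → s = 0 ∨ s = 1
  inj : ∀ s ∈ Set.Icc (0 : ℝ) 1, ∀ t ∈ Set.Icc (0 : ℝ) 1, E s = E t → E s ≠ star → s = t

theorem exists_isLoopParam (star : Circle1) : ∃ E, IsLoopParam star E := by
  have hnorm : ∀ x : Circle1, ‖circleToComplex x‖ = 1 := fun x => by
    rw [circleToComplex, LinearIsometryEquiv.norm_map]
    exact mem_sphere_zero_iff_norm.mp x.2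
  let w := circleToComplex star
  have hw : w ≠ 0 := fun h => by simpa [w, h] using hnorm star
  have hexp : ∀ s : ℝ, Complex.orthonormalBasisOneI.repr
      (w * Complex.exp ((2 * Real.pi * s : ℝ) * Complex.I)) ∈
      Metric.sphere (0 : EuclideanSpace ℝ (Fin 2)) 1 := fun s => by
    rw [mem_sphere_zero_iff_norm, LinearIsometryEquiv.norm_map, norm_mul,
      Complex.norm_exp_ofReal_mul_I, hnorm, one_mul]
  let E : ℝ → Circle1 := fun s => ⟨_, hexp s⟩
  have hE : ∀ s, circleToComplex (E s) = w * Complex.exp ((2 * Real.pi * s : ℝ) * Complex.I) :=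
    fun s => by simp [circleToComplex, E]
  have hstar : ∀ s x, E s = x ↔
      w * Complex.exp ((2 * Real.pi * s : ℝ) * Complex.I) = circleToComplex x := fun s x => by
    rw [← hE, circleToComplex_injective.eq_iff]
  have hEE : ∀ s t, E s = E t ↔ ∃ z : ℤ, s = t + z := fun s t => by
    rw [hstar, hE, mul_right_inj' hw, Complex.exp_eq_exp_iff_exists_int]
    refine exists_congr fun z => ?_
    have h2 : (2 * Real.pi * Complex.I : ℂ) ≠ 0 := by simp [Real.pi_ne_zero]
    have : ((2 * Real.pi * s : ℝ) * Complex.I : ℂ) =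
        (2 * Real.pi * t : ℝ) * Complex.I + z * (2 * Real.pi * Complex.I) ↔
        (2 * Real.pi * Complex.I) * (s : ℂ) = (2 * Real.pi * Complex.I) * ((t + z : ℝ) : ℂ) := by
      push_cast
      constructor <;> intro h <;> linear_combination h
    rw [this, mul_right_inj' h2, Complex.ofReal_inj]
  have h0 : E 0 = star := by rw [hstar]; simp [w]
  have h1 : E 1 = star := by rw [← h0, hEE]; exact ⟨1, by simp⟩
  refine ⟨E, ?_, h0, h1, ?_, ?_, ?_⟩
  · refine Continuous.subtype_mk ?_ _
    fun_prop
  · intro x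
    have hq : ‖circleToComplex x / w‖ = 1 := by simp [hnorm, w]
    let s := Complex.arg (circleToComplex x / w) / (2 * Real.pi)
    have hs : E s = x := by
      rw [hstar]
      have : 2 * Real.pi * s = Complex.arg (circleToComplex x / w) := by
        simp only [s]; field_simp
      have h3 := Complex.norm_mul_exp_arg_mul_I (circleToComplex x / w)
      rw [hq, Complex.ofReal_one, one_mul] at h3
      rw [this, h3]
      field_simp
    refine ⟨Int.fract s, ⟨Int.fract_nonneg s, (Int.fract_lt_one s).le⟩, ?_⟩
    rw [← hs, hEE]
    exact ⟨-⌊s⌋, by simp [Int.fract, sub_eq_add_neg]⟩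
  · intro s hs h
    obtain ⟨z, hz⟩ := (hEE s 0).mp (h.trans h0.symm)
    rw [zero_add] at hz
    subst hz
    have hz0 : 0 ≤ z := by exact_mod_cast hs.1
    have hz1 : z ≤ 1 := by exact_mod_cast hs.2
    interval_cases z <;> simp
  · intro s hs t ht h hne
    obtain ⟨z, hz⟩ := (hEE s t).mp h
    have hlt : ∀ r ∈ Set.Icc (0 : ℝ) 1, E r ≠ star → 0 < r ∧ r < 1 := fun r hr hr' =>
      ⟨lt_of_le_of_ne hr.1 fun h => hr' (h ▸ h0), lt_of_le_of_ne hr.2 fun h => hr' (h ▸ h1)⟩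
    have hs' := hlt s hs hne
    have ht' := hlt t ht (h ▸ hne)
    have hz1 : (z : ℝ) < 1 := by linarith
    have hz2 : (-1 : ℝ) < z := by linarith
    have : z = 0 := by
      have h1 : z < 1 := by exact_mod_cast hz1
      have h2 : -1 < z := by exact_mod_cast hz2
      omega
    simpa [this] using hz

end CircleParametrization

section Tuples

theorem map_univ_eq_sum {ι α : Type} [Fintype ι] (f : ι → α) :
    Multiset.map f Finset.univ.val = ∑ i, {f i} := by
  rw [Finset.sum, ← Multiset.sum_map_singleton (Multiset.map f _), Multiset.map_map]
  rfl

/-- The tuple listing each entry of `q` with multiplicity `a` and each entry of `r` once. -/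
def spread (a : ℕ) {k L : ℕ} {α : Type} (v : (Fin k → α) × (Fin L → α)) : Fin (a * k + L) → α :=
  fun i => Sum.elim (fun p => v.1 (finProdFinEquiv.symm p).2) v.2 (finSumFinEquiv.symm i)

variable {a k L : ℕ}

theorem map_spread {α : Type} (v : (Fin k → α) × (Fin L → α)) :
    Multiset.map (spread a v) Finset.univ.val =
      a • Multiset.map v.1 Finset.univ.val + Multiset.map v.2 Finset.univ.val := by
  rw [map_univ_eq_sum, map_univ_eq_sum, map_univ_eq_sum, ← Equiv.sum_comp finSumFinEquiv,
    Fintype.sum_sum_type,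
    ← Equiv.sum_comp finProdFinEquiv, Fintype.sum_prod_type]
  simp only [spread, Equiv.symm_apply_apply, Sum.elim_inl, Sum.elim_inr, Finset.sum_const,
    Finset.card_univ, Fintype.card_fin]

theorem comp_spread {α β : Type} (f : α → β) (v : (Fin k → α) × (Fin L → α)) :
    f ∘ spread a v = spread a (f ∘ v.1, f ∘ v.2) := by
  funext i
  simp only [spread, Function.comp_apply]
  cases finSumFinEquiv.symm i <;> rfl

theorem continuous_spread {α : Type} [TopologicalSpace α] :
    Continuous (spread a : (Fin k → α) × (Fin L → α) → Fin (a * k + L) → α) := by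
  refine continuous_pi fun i => ?_
  simp only [spread]
  cases finSumFinEquiv.symm i <;> simp only [Sum.elim_inl, Sum.elim_inr] <;> fun_prop

theorem exists_spread_eq_iff (ha : 0 < a) {α : Type} (v : (Fin k → α) × (Fin L → α)) (z : α) :
    (∃ i, spread a v i = z) ↔ (∃ i, v.1 i = z) ∨ ∃ i, v.2 i = z := by
  have h : (∃ i, spread a v i = z) ↔ z ∈ Multiset.map (spread a v) Finset.univ.val := by simp
  rw [h, map_spread, Multiset.mem_add, Multiset.mem_nsmul]
  simp [ha.ne']

theorem eq_of_monotone_of_map_eq {m : ℕ} {q q' : Fin m → ℝ} (hq : Monotone q) (hq' : Monotone q')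
    (h : Multiset.map q Finset.univ.val = Multiset.map q' Finset.univ.val) : q = q' := by
  have hperm : (List.ofFn q).Perm (List.ofFn q') := by
    rw [← Multiset.coe_eq_coe]
    simpa using h
  exact List.ofFn_injective (hperm.eq_of_sortedLE hq.sortedLE_ofFn hq'.sortedLE_ofFn)

theorem exists_monotone_map_eq {m : ℕ} (S : Multiset ℝ) (hS : S.card = m) :
    ∃ q : Fin m → ℝ, Monotone q ∧ Multiset.map q Finset.univ.val = S := by
  subst hS
  have hlen : (S.sort (· ≤ ·)).length = S.card := Multiset.length_sort _
  refine ⟨fun i => (S.sort (· ≤ ·)).get (i.cast hlen.symm), ?_, ?_⟩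
  · rw [← List.sortedLE_ofFn_iff]
    have : List.ofFn (fun i : Fin S.card => (S.sort (· ≤ ·)).get (i.cast hlen.symm)) =
        S.sort (· ≤ ·) := by
      apply List.ext_get <;> simp
    rw [this]
    exact (Multiset.pairwise_sort S (· ≤ ·)).sortedLE
  · have : List.ofFn (fun i : Fin S.card => (S.sort (· ≤ ·)).get (i.cast hlen.symm)) =
        S.sort (· ≤ ·) := by
      apply List.ext_get <;> simp
    conv_rhs => rw [← Multiset.sort_eq S (· ≤ ·), ← this]
    simp

/-- Decompositions `a • Q + R` with `R` of multiplicities less than `a` are unique. -/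
theorem nsmul_add_unique {α : Type} [DecidableEq α] (ha : 0 < a) {Q Q' R R' : Multiset α}
    (h : a • Q + R = a • Q' + R') (hcard : R.card = R'.card) (hR' : ∀ z, R'.count z < a) :
    Q = Q' ∧ R = R' := by
  have hle : R' ≤ R := by
    refine Multiset.le_iff_count.mpr fun z => ?_
    have hz := congrArg (fun s => s.count z % a) h
    simp only [Multiset.count_add, Multiset.count_nsmul, Nat.mul_add_mod,
      Nat.mod_eq_of_lt (hR' z)] at hz
    exact hz ▸ Nat.mod_le _ _
  have hRR : R' = R := Multiset.eq_of_le_of_card_le hle hcard.le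
  subst hRR
  refine ⟨?_, rfl⟩
  have h' := add_right_cancel h
  ext z
  have hz := congrArg (Multiset.count z) h'
  rw [Multiset.count_nsmul, Multiset.count_nsmul] at hz
  exact Nat.eq_of_mul_eq_mul_left ha hz

theorem exists_eq_of_le_count_of_monotone (ha : 0 < a) {r : Fin L → ℝ} (hr : Monotone r) {z : ℝ}
    (hz : a ≤ (Multiset.map r Finset.univ.val).count z) :
    ∃ p q : Fin L, (p : ℕ) + a = q + 1 ∧ r p = r q := by
  classical
  set S : Finset (Fin L) := Finset.univ.filter fun i => r i = z with hSdef
  have hS : a ≤ S.card := by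
    rw [Multiset.count_map] at hz
    rw [hSdef, Finset.card_def, Finset.filter_val]
    simpa only [eq_comm] using hz
  have hne : S.Nonempty := Finset.card_pos.mp (ha.trans_le hS)
  have hmin := (Finset.mem_filter.mp (S.min'_mem hne)).2
  have hmax := (Finset.mem_filter.mp (S.max'_mem hne)).2
  have hsub : S ⊆ Finset.Icc (S.min' hne) (S.max' hne) := fun i hi =>
    Finset.mem_Icc.mpr ⟨S.min'_le i hi, S.le_max' i hi⟩
  have hcard := (hS.trans (Finset.card_le_card hsub))
  rw [Fin.card_Icc] at hcard
  have hlt := (S.max' hne).isLt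
  refine ⟨S.min' hne, ⟨S.min' hne + a - 1, by omega⟩, by simp only; omega, ?_⟩
  refine le_antisymm (hr (Fin.le_def.mpr (by simp only; omega))) ?_
  refine le_trans ?_ (hmax.trans hmin.symm).le
  exact hr (Fin.le_def.mpr (by simp only; omega))

end Tuples

section Cluster

/-- A weight on the line that vanishes exactly within distance `η` of some `x i`. -/
noncomputable def clusterWeight {n : ℕ} (η : ℝ) (x : Fin n → ℝ) (u : ℝ) : ℝ :=
  ∏ i, max 0 (|u - x i| - η)

/-- A reparametrization of `[0, 1]` collapsing the `η`-neighbourhood of every `x i`. -/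
noncomputable def clusterMap {n : ℕ} (η : ℝ) (x : Fin n → ℝ) (s : ℝ) : ℝ :=
  (∫ u in (0 : ℝ)..s, clusterWeight η x u) / ∫ u in (0 : ℝ)..1, clusterWeight η x u

variable {n : ℕ} {η : ℝ}

theorem continuous_clusterWeight :
    Continuous (Function.uncurry (clusterWeight (n := n) η)) := by
  unfold clusterWeight Function.uncurry
  fun_prop

theorem clusterWeight_nonneg (x : Fin n → ℝ) (u : ℝ) : 0 ≤ clusterWeight η x u :=
  Finset.prod_nonneg fun _ _ => le_max_left _ _

theorem exists_clusterWeight_pos (hη : 2 * η * (n + 1) < 1) (x : Fin n → ℝ) :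
    ∃ u ∈ Set.Ioo (0 : ℝ) 1, 0 < clusterWeight η x u := by
  have hη' : 2 * η < 1 / (n + 1) := by rw [lt_div_iff₀ (by positivity)]; exact hη
  by_contra! hcon
  have hex : ∀ j : Fin (n + 1), ∃ i, |((j : ℝ) + 1 / 2) / (n + 1) - x i| ≤ η := fun j => by
    have hj : (j : ℝ) + 1 ≤ n + 1 := by exact_mod_cast j.isLt
    have hle := hcon (((j : ℝ) + 1 / 2) / (n + 1))
      ⟨by positivity, by rw [div_lt_one (by positivity)]; linarith⟩
    by_contra! hall
    exact absurd (Finset.prod_pos fun i _ => lt_max_of_lt_right (sub_pos.mpr (hall i)))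
      (not_lt.mpr hle)
  choose f hf using hex
  obtain ⟨j, j', hne, heq⟩ := Fintype.exists_ne_map_eq_of_card_lt f (by simp)
  wlog hlt : j < j' generalizing j j'
  · exact this j' j hne.symm heq.symm (lt_of_le_of_ne (not_lt.mp hlt) hne.symm)
  have h1 := abs_le.mp (hf j)
  have h2 := abs_le.mp (hf j')
  rw [← heq] at h2
  have h3 : (j : ℝ) + 1 ≤ j' := by exact_mod_cast hlt
  have h4 : 1 / ((n : ℝ) + 1) ≤ ((j' : ℝ) + 1 / 2) / (n + 1) - ((j : ℝ) + 1 / 2) / (n + 1) := by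
    rw [← sub_div]
    gcongr
    linarith
  linarith

theorem integral_clusterWeight_pos (hη : 2 * η * (n + 1) < 1) (x : Fin n → ℝ) :
    0 < ∫ u in (0 : ℝ)..1, clusterWeight η x u := by
  obtain ⟨u, hu, hpos⟩ := exists_clusterWeight_pos hη x
  exact intervalIntegral.integral_pos zero_lt_one
    (continuous_clusterWeight.uncurry_left x).continuousOn
    (fun v _ => clusterWeight_nonneg x v) ⟨u, Set.Ioo_subset_Icc_self hu, hpos⟩

theorem continuous_clusterMap {Y : Type} [TopologicalSpace Y] [FirstCountableTopology Y]
    {x : Y → Fin n → ℝ} {s : Y → ℝ} (hη : 2 * η * (n + 1) < 1) (hx : Continuous x)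
    (hs : Continuous s) : Continuous fun p => clusterMap η (x p) (s p) := by
  have h : Continuous (Function.uncurry fun p u => clusterWeight η (x p) u) :=
    continuous_clusterWeight.comp ((hx.comp continuous_fst).prodMk continuous_snd)
  exact (intervalIntegral.continuous_parametric_intervalIntegral_of_continuous h hs).div
    (intervalIntegral.continuous_parametric_intervalIntegral_of_continuous h continuous_const)
    fun p => (integral_clusterWeight_pos hη (x p)).ne'

theorem clusterMap_zero (x : Fin n → ℝ) : clusterMap η x 0 = 0 := by
  simp [clusterMap]

theorem clusterMap_one (hη : 2 * η * (n + 1) < 1) (x : Fin n → ℝ) : clusterMap η x 1 = 1 :=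
  div_self (integral_clusterWeight_pos hη x).ne'

theorem clusterMap_eq_of_abs_sub_le {x : Fin n → ℝ} {s : ℝ} (i : Fin n) (h : |s - x i| ≤ η) :
    clusterMap η x s = clusterMap η x (x i) := by
  have hw_int : ∀ b c : ℝ, IntervalIntegrable (clusterWeight η x) MeasureTheory.volume b c :=
    fun b c => (continuous_clusterWeight.uncurry_left x).intervalIntegrable b c
  have hzero : ∫ u in s..x i, clusterWeight η x u = 0 := by
    refine intervalIntegral.integral_zero_ae (Filter.Eventually.of_forall fun u hu => ?_)
    refine Finset.prod_eq_zero (Finset.mem_univ i) (max_eq_left (sub_nonpos.mpr ?_))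
    rw [← abs_neg, neg_sub]
    refine le_trans ?_ h
    rw [abs_sub_comm s]
    exact Set.abs_sub_right_of_mem_uIcc (Set.uIoc_subset_uIcc hu)
  unfold clusterMap
  rw [← intervalIntegral.integral_add_adjacent_intervals (hw_int 0 s) (hw_int s (x i)), hzero, add_zero]

theorem clusterMap_congr {x x' : Fin n → ℝ}
    (h : Multiset.map x Finset.univ.val = Multiset.map x' Finset.univ.val) :
    clusterMap η x = clusterMap η x' := by
  have hw : clusterWeight η x = clusterWeight η x' := by
    funext u
    have := congrArg (fun S => (Multiset.map (fun z => max 0 (|u - z| - η)) S).prod) h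
    simp only [Multiset.map_map] at this
    exact this
  funext s
  rw [clusterMap, clusterMap, hw]

end Cluster

section BlockSet

/-- The points of the symmetric smash product that are the base point or the class of a multiset
containing `k` blocks of `a` equal points. -/
def blockSet (n a k : ℕ) (X : Type) [TopologicalSpace X] (star : X) : Set (SymSmash n X star) :=
  {p | ∃ y : Fin n → X, p = symProj n X star y ∧ ((∃ i, y i = star) ∨
    ∃ Q : Multiset X, Q.card = k ∧ a • Q ≤ Multiset.map y Finset.univ.val)}

/-- Pairs of nondecreasing tuples in `[0, 1]`. -/
def sortedPairs (k L : ℕ) : Set ((Fin k → ℝ) × (Fin L → ℝ)) :=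
  {v | (Monotone v.1 ∧ Monotone v.2) ∧ (∀ i, v.1 i ∈ Set.Icc 0 1) ∧ ∀ i, v.2 i ∈ Set.Icc 0 1}

/-- One of the entries is an end point of `[0, 1]`. -/
def HasEnd {k L : ℕ} (v : (Fin k → ℝ) × (Fin L → ℝ)) : Prop :=
  (∃ i, v.1 i = 0 ∨ v.1 i = 1) ∨ ∃ i, v.2 i = 0 ∨ v.2 i = 1

/-- A homotopy of pairs of tuples that is constant where the second tuple has a block of `a` equal
entries, and which moves every pair to one with an entry at an end point or with `a` consecutive
entries of the second tuple at distance at most `η`. -/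
structure IsPush (a : ℕ) {k L : ℕ} (η : ℝ)
    (H : ℝ → (Fin k → ℝ) × (Fin L → ℝ) → (Fin k → ℝ) × (Fin L → ℝ)) : Prop where
  continuous : Continuous fun p : ℝ × ((Fin k → ℝ) × (Fin L → ℝ)) => H p.1 p.2
  zero : ∀ v ∈ sortedPairs k L, H 0 v = v
  fix : ∀ v ∈ sortedPairs k L, ∀ p q : Fin L, (p : ℕ) + a = q + 1 → v.2 p = v.2 q →
    ∀ t, H t v = v
  ends : ∀ v ∈ sortedPairs k L, HasEnd v → ∀ t, HasEnd (H t v)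
  final : ∀ v ∈ sortedPairs k L, HasEnd (H 1 v) ∨
    ∃ p : ℕ, p + a ≤ L ∧ ∃ c, ∀ i : Fin L, p ≤ i → (i : ℕ) < p + a →
      (H 1 v).2 i ∈ Set.Icc c (c + η)

theorem isCompact_sortedPairs (k L : ℕ) : IsCompact (sortedPairs k L) := by
  have hprod : IsCompact ((Set.univ.pi fun _ : Fin k => Set.Icc (0 : ℝ) 1) ×ˢ
      (Set.univ.pi fun _ : Fin L => Set.Icc (0 : ℝ) 1)) :=
    (isCompact_univ_pi fun _ => isCompact_Icc).prod (isCompact_univ_pi fun _ => isCompact_Icc)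
  have hmono : ∀ m : ℕ, IsClosed {f : Fin m → ℝ | Monotone f} := fun m => by
    simp only [Monotone, Set.ofPred_forall]
    exact isClosed_iInter fun i => isClosed_iInter fun j => isClosed_iInter fun _ =>
      isClosed_le (continuous_apply i) (continuous_apply j)
  have hclosed : IsClosed {v : (Fin k → ℝ) × (Fin L → ℝ) | Monotone v.1 ∧ Monotone v.2} :=
    ((hmono k).preimage continuous_fst).inter ((hmono L).preimage continuous_snd)
  convert hprod.inter_left hclosed using 1
  ext v
  simp only [sortedPairs, Set.mem_inter_iff, Set.mem_prod, Set.mem_univ_pi]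
  rfl

variable {a k L : ℕ} {star : Circle1} {E : ℝ → Circle1}

theorem star_mem_blockSet {n : ℕ} {X : Type} [TopologicalSpace X] {star : X} {y : Fin n → X}
    (h : ∃ i, y i = star) (k : ℕ) : symProj n X star y ∈ blockSet n a k X star :=
  ⟨y, rfl, Or.inl h⟩

theorem symProj_comp_spread_mem (f : ℝ → Circle1) (v : (Fin k → ℝ) × (Fin L → ℝ)) :
    symProj _ _ star (f ∘ spread a v) ∈ blockSet (a * k + L) a k Circle1 star := by
  refine ⟨_, rfl, Or.inr ⟨Multiset.map (f ∘ v.1) Finset.univ.val, by simp, ?_⟩⟩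
  rw [comp_spread, map_spread]
  exact Multiset.le_add_right _ _

theorem IsLoopParam.exists_star_of_hasEnd (hE : IsLoopParam star E) (ha : 0 < a)
    {v : (Fin k → ℝ) × (Fin L → ℝ)} (h : HasEnd v) {g : ℝ → ℝ} (g0 : g 0 = 0) (g1 : g 1 = 1) :
    ∃ i, (E ∘ g ∘ spread a v) i = star := by
  have key : ∀ z, (z = 0 ∨ z = 1) → E (g z) = star := by
    rintro z (rfl | rfl)
    · rw [g0, hE.zero]
    · rw [g1, hE.one]
  have : ∃ z, (z = 0 ∨ z = 1) ∧ ∃ i, spread a v i = z := by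
    rcases h with ⟨i, hi⟩ | ⟨i, hi⟩
    · exact ⟨_, hi, (exists_spread_eq_iff ha v _).mpr (Or.inl ⟨i, rfl⟩)⟩
    · exact ⟨_, hi, (exists_spread_eq_iff ha v _).mpr (Or.inr ⟨i, rfl⟩)⟩
  obtain ⟨z, hz, i, rfl⟩ := this
  exact ⟨i, key _ hz⟩

theorem IsLoopParam.hasEnd_of_star (hE : IsLoopParam star E) (ha : 0 < a)
    {v : (Fin k → ℝ) × (Fin L → ℝ)} (hv : v ∈ sortedPairs k L)
    (h : ∃ i, (E ∘ spread a v) i = star) : HasEnd v := by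
  rw [comp_spread, exists_spread_eq_iff ha] at h
  exact h.imp (fun ⟨i, hi⟩ => ⟨i, hE.ends _ (hv.2.1 i) hi⟩)
    fun ⟨i, hi⟩ => ⟨i, hE.ends _ (hv.2.2 i) hi⟩

theorem IsLoopParam.exists_monotone_lift (hE : IsLoopParam star E) {m : ℕ} (S : Multiset Circle1)
    (hS : S.card = m) : ∃ q : Fin m → ℝ, Monotone q ∧ (∀ i, q i ∈ Set.Icc (0 : ℝ) 1) ∧
      Multiset.map (E ∘ q) Finset.univ.val = S := by
  choose s hs hEs using hE.surj
  obtain ⟨q, hq, hmap⟩ := exists_monotone_map_eq (S.map s) (m := m) (by simpa using hS)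
  refine ⟨q, hq, fun i => ?_, ?_⟩
  · have : q i ∈ S.map s := hmap ▸ Multiset.mem_map_of_mem q (Finset.mem_univ_val i)
    obtain ⟨x, _, hx⟩ := Multiset.mem_map.mp this
    exact hx ▸ hs x
  · rw [← Multiset.map_map, hmap, Multiset.map_map]
    simp [hEs]

theorem IsLoopParam.exists_sortedPairs (hE : IsLoopParam star E)
    {p : SymSmash (a * k + L) Circle1 star} (hp : p ∈ blockSet (a * k + L) a k Circle1 star) :
    ∃ v ∈ sortedPairs k L, symProj _ _ star (E ∘ spread a v) = p := by
  obtain ⟨y, rfl, ⟨i, hi⟩ | ⟨Q, hQ, hle⟩⟩ := hp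
  · refine ⟨0, ⟨⟨monotone_const, monotone_const⟩, fun _ => by simp, fun _ => by simp⟩, ?_⟩
    refine symProj_eq_of_star ⟨i, ?_⟩ ⟨i, hi⟩
    have : spread a (0 : (Fin k → ℝ) × (Fin L → ℝ)) i = 0 := by
      unfold spread
      cases finSumFinEquiv.symm i <;> rfl
    rw [Function.comp_apply, this, hE.zero]
  · obtain ⟨R, hR⟩ := Multiset.le_iff_exists_add.mp hle
    have hRcard : R.card = L := by
      have := congrArg Multiset.card hR
      simp only [Multiset.card_map, Finset.card_val, Finset.card_univ, Fintype.card_fin,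
        Multiset.card_add, Multiset.card_nsmul, hQ] at this
      simpa using this.symm
    obtain ⟨q, hq, hq', hqm⟩ := hE.exists_monotone_lift Q hQ
    obtain ⟨r, hr, hr', hrm⟩ := hE.exists_monotone_lift R hRcard
    refine ⟨(q, r), ⟨⟨hq, hr⟩, hq', hr'⟩, symProj_eq_of_map_eq ?_⟩
    rw [comp_spread, map_spread, hR, hqm, hrm]

/-- The homotopy `H` followed by the straight-line homotopy to `clusterMap`, with values in the
symmetric smash product. -/
noncomputable def pushPath (a : ℕ) {k L : ℕ} (star : Circle1) (E : ℝ → Circle1) (η : ℝ)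
    (H : ℝ → (Fin k → ℝ) × (Fin L → ℝ) → (Fin k → ℝ) × (Fin L → ℝ)) (t : ℝ)
    (v : (Fin k → ℝ) × (Fin L → ℝ)) : SymSmash (a * k + L) Circle1 star :=
  symProj _ _ star (E ∘ (fun s => (1 - t) * s + t * clusterMap η (spread a (H t v)) s) ∘
    spread a (H t v))

variable {η : ℝ} {H : ℝ → (Fin k → ℝ) × (Fin L → ℝ) → (Fin k → ℝ) × (Fin L → ℝ)}

theorem continuous_pushPath (hE : IsLoopParam star E) (hη : 2 * η * ((a * k + L : ℕ) + 1) < 1)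
    (hH : IsPush a η H) :
    Continuous fun p : ℝ × ((Fin k → ℝ) × (Fin L → ℝ)) => pushPath a star E η H p.1 p.2 := by
  refine continuous_symProj.comp (continuous_pi fun i => hE.continuous.comp ?_)
  have hsp : Continuous fun p : ℝ × ((Fin k → ℝ) × (Fin L → ℝ)) => spread a (H p.1 p.2) :=
    continuous_spread.comp hH.continuous
  have hsi : Continuous fun p : ℝ × ((Fin k → ℝ) × (Fin L → ℝ)) => spread a (H p.1 p.2) i :=
    (continuous_apply i).comp hsp
  have hcl : Continuous fun p : ℝ × ((Fin k → ℝ) × (Fin L → ℝ)) =>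
      clusterMap η (spread a (H p.1 p.2)) (spread a (H p.1 p.2) i) :=
    continuous_clusterMap hη hsp hsi
  exact ((continuous_const.sub continuous_fst).mul hsi).add (continuous_fst.mul hcl)

theorem pushPath_mem (t : ℝ) (v : (Fin k → ℝ) × (Fin L → ℝ)) :
    pushPath a star E η H t v ∈ blockSet (a * k + L) a k Circle1 star :=
  symProj_comp_spread_mem
    (E ∘ fun s => (1 - t) * s + t * clusterMap η (spread a (H t v)) s) (H t v)

theorem pushPath_zero (hH : IsPush a η H) {v : (Fin k → ℝ) × (Fin L → ℝ)}
    (hv : v ∈ sortedPairs k L) :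
    pushPath a star E η H 0 v = symProj _ _ star (E ∘ spread a v) := by
  simp only [pushPath, hH.zero v hv]
  congr 1
  funext i
  simp

theorem pushPath_congr (hE : IsLoopParam star E) (ha : 0 < a)
    (hη : 2 * η * ((a * k + L : ℕ) + 1) < 1) (hH : IsPush a η H)
    {v v' : (Fin k → ℝ) × (Fin L → ℝ)} (hv : v ∈ sortedPairs k L) (hv' : v' ∈ sortedPairs k L)
    (h : symProj _ _ star (E ∘ spread a v) = symProj _ _ star (E ∘ spread a v')) (t : ℝ) :
    pushPath a star E η H t v = pushPath a star E η H t v' := by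
  by_cases hstar : (∃ i, (E ∘ spread a v) i = star) ∧ ∃ i, (E ∘ spread a v') i = star
  · have hend : ∀ w ∈ sortedPairs k L, (∃ i, (E ∘ spread a w) i = star) →
        ∃ i, (E ∘ (fun s => (1 - t) * s + t * clusterMap η (spread a (H t w)) s) ∘
          spread a (H t w)) i = star := fun w hw h =>
      hE.exists_star_of_hasEnd ha (hH.ends w hw (hE.hasEnd_of_star ha hw h) t)
        (by simp [clusterMap_zero]) (by simp [clusterMap_one hη])
    exact symProj_eq_of_star (hend v hv hstar.1) (hend v' hv' hstar.2)
  · have hmapE := (map_eq_or_star_of_symProj_eq circleToComplex_injective h).resolve_right hstar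
    have hnostar : ∀ i, (E ∘ spread a v) i ≠ star := by
      intro i hi
      refine hstar ⟨⟨i, hi⟩, ?_⟩
      have : star ∈ Multiset.map (E ∘ spread a v') Finset.univ.val :=
        hmapE ▸ Multiset.mem_map.mpr ⟨i, Finset.mem_univ_val i, hi⟩
      obtain ⟨j, _, hj⟩ := Multiset.mem_map.mp this
      exact ⟨j, hj⟩
    have hIcc : ∀ w ∈ sortedPairs k L, ∀ i, spread a w i ∈ Set.Icc (0 : ℝ) 1 := by
      intro w hw i
      rcases (exists_spread_eq_iff ha w _).mp ⟨i, rfl⟩ with ⟨j, hj⟩ | ⟨j, hj⟩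
      · exact hj ▸ hw.2.1 j
      · exact hj ▸ hw.2.2 j
    obtain ⟨σ, hσ⟩ := permRel_of_map_eq hmapE
    have hσ' : spread a v ∘ σ = spread a v' := funext fun i =>
      hE.inj _ (hIcc v hv _) _ (hIcc v' hv' _) (congrFun hσ i) (hnostar _)
    have hmap : Multiset.map (spread a v) Finset.univ.val =
        Multiset.map (spread a v') Finset.univ.val := by
      rw [← hσ', ← Multiset.map_map, Multiset.map_univ_val_equiv]
    have hdec := hmap
    rw [map_spread, map_spread] at hdec
    by_cases hb : (∃ z, a ≤ (Multiset.map v.2 Finset.univ.val).count z) ∧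
        ∃ z, a ≤ (Multiset.map v'.2 Finset.univ.val).count z
    · obtain ⟨⟨z, hz⟩, z', hz'⟩ := hb
      obtain ⟨p, q, hpq, hr⟩ := exists_eq_of_le_count_of_monotone ha hv.1.2 hz
      obtain ⟨p', q', hpq', hr'⟩ := exists_eq_of_le_count_of_monotone ha hv'.1.2 hz'
      simp only [pushPath, hH.fix v hv p q hpq hr t, hH.fix v' hv' p' q' hpq' hr' t,
        clusterMap_congr hmap]
      apply symProj_eq_of_map_eq
      rw [← Function.comp_assoc, ← Multiset.map_map, hmap, Multiset.map_map]
      rfl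
    · have huniq : Multiset.map v.1 Finset.univ.val = Multiset.map v'.1 Finset.univ.val ∧
          Multiset.map v.2 Finset.univ.val = Multiset.map v'.2 Finset.univ.val := by
        rcases not_and_or.mp hb with hb | hb <;> push Not at hb
        · have := nsmul_add_unique ha hdec.symm (by simp) hb
          exact ⟨this.1.symm, this.2.symm⟩
        · exact nsmul_add_unique ha hdec (by simp) hb
      have : v = v' := Prod.ext (eq_of_monotone_of_map_eq hv.1.1 hv'.1.1 huniq.1)
        (eq_of_monotone_of_map_eq hv.1.2 hv'.1.2 huniq.2)
      rw [this]

theorem pushPath_one_mem (hE : IsLoopParam star E) (ha : 0 < a)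
    (hη : 2 * η * ((a * k + L : ℕ) + 1) < 1) (hH : IsPush a η H)
    {v : (Fin k → ℝ) × (Fin L → ℝ)} (hv : v ∈ sortedPairs k L) :
    pushPath a star E η H 1 v ∈ blockSet (a * k + L) a (k + 1) Circle1 star := by
  rcases hH.final v hv with h | ⟨p, hp, c, hc⟩
  · exact star_mem_blockSet (hE.exists_star_of_hasEnd ha h
      (by simp [clusterMap_zero]) (by simp [clusterMap_one hη])) _
  · set w := H 1 v
    set f : ℝ → Circle1 := E ∘ fun s => (1 - (1 : ℝ)) * s + 1 * clusterMap η (spread a w) s with hf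
    let i₀ : Fin L := ⟨p, by omega⟩
    obtain ⟨j₀, hj₀⟩ := (exists_spread_eq_iff ha w (w.2 i₀)).mpr (Or.inr ⟨i₀, rfl⟩)
    have hi₀ := hc i₀ le_rfl (by simp only [i₀]; omega)
    have hsame : ∀ i : Fin L, p ≤ i → (i : ℕ) < p + a → f (w.2 i) = f (w.2 i₀) := by
      intro i h1 h2
      have h3 := hc i h1 h2
      have : clusterMap η (spread a w) (w.2 i) = clusterMap η (spread a w) (spread a w j₀) := by
        refine clusterMap_eq_of_abs_sub_le j₀ ?_
        rw [hj₀, abs_le]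
        constructor <;> linarith [h3.1, h3.2, hi₀.1, hi₀.2]
      rw [hj₀] at this
      simp only [hf, Function.comp_apply, this, sub_self, zero_mul, zero_add]
    change symProj _ _ star (f ∘ spread a w) ∈ _
    refine ⟨_, rfl, Or.inr ⟨f (w.2 i₀) ::ₘ Multiset.map (f ∘ w.1) Finset.univ.val, by simp, ?_⟩⟩
    rw [comp_spread, map_spread, ← Multiset.singleton_add, smul_add,
      add_comm]
    refine add_le_add_right ?_ _
    rw [Multiset.nsmul_singleton, ← Multiset.le_count_iff_replicate_le, Multiset.count_map]
    let e : Fin a ↪ Fin L := ⟨fun j => ⟨p + j, by omega⟩, fun j j' h => by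
      simpa [Fin.ext_iff] using h⟩
    have hsub : Finset.univ.map e ⊆ Finset.univ.filter fun i => f (w.2 i₀) = (f ∘ w.2) i := by
      intro i hi
      obtain ⟨j, _, rfl⟩ := Finset.mem_map.mp hi
      refine Finset.mem_filter.mpr ⟨Finset.mem_univ _, (hsame _ ?_ ?_).symm⟩
      · exact Nat.le_add_right p j
      · exact Nat.add_lt_add_left j.isLt p
    have hcard := Finset.card_le_card hsub
    rwa [Finset.card_map, Finset.card_univ, Fintype.card_fin] at hcard

/-- A push deforms the set of points with `k` blocks into the set of points with `k + 1` blocks. -/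
theorem exists_homotopy_of_isPush (hE : IsLoopParam star E) (ha : 0 < a)
    (hη : 2 * η * ((a * k + L : ℕ) + 1) < 1) (hH : IsPush a η H) :
    ∃ f : C(blockSet (a * k + L) a k Circle1 star, blockSet (a * k + L) a k Circle1 star),
      (ContinuousMap.id _).Homotopic f ∧
        ∀ p, (f p : SymSmash (a * k + L) Circle1 star) ∈
          blockSet (a * k + L) a (k + 1) Circle1 star := by
  have hT2 : T2Space (SymSmash (a * k + L) Circle1 star) :=
    t2Space_symSmash continuous_circleToComplex circleToComplex_injective
  have hcompact : CompactSpace (sortedPairs k L) :=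
    isCompact_iff_compactSpace.mp (isCompact_sortedPairs k L)
  let π : unitInterval × sortedPairs k L →
      unitInterval × blockSet (a * k + L) a k Circle1 star :=
    fun p => (p.1, ⟨symProj _ _ star (E ∘ spread a p.2.1), symProj_comp_spread_mem E _⟩)
  have hπc : Continuous π := by
    refine continuous_fst.prodMk (Continuous.subtype_mk (continuous_symProj.comp ?_) _)
    exact continuous_pi fun i => hE.continuous.comp
      ((continuous_apply i).comp (continuous_spread.comp (by fun_prop)))
  have hπs : Function.Surjective π := by
    rintro ⟨t, p, hp⟩
    obtain ⟨v, hv, rfl⟩ := hE.exists_sortedPairs hp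
    exact ⟨(t, ⟨v, hv⟩), rfl⟩
  have hπ : IsQuotientMap π := hπc.isClosedMap.isQuotientMap hπc hπs
  let Φ : C(unitInterval × sortedPairs k L, blockSet (a * k + L) a k Circle1 star) :=
    ⟨fun p => ⟨pushPath a star E η H p.1 p.2, pushPath_mem _ _⟩,
      Continuous.subtype_mk ((continuous_pushPath hE hη hH).comp
        (by fun_prop : Continuous fun p : unitInterval × sortedPairs k L =>
          ((p.1 : ℝ), (p.2 : (Fin k → ℝ) × (Fin L → ℝ))))) _⟩
  have hΦ : Function.FactorsThrough Φ π := by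
    rintro ⟨t, v, hv⟩ ⟨t', v', hv'⟩ h
    obtain ⟨rfl, h2⟩ := Prod.mk.inj h
    exact Subtype.ext (pushPath_congr hE ha hη hH hv hv' (congrArg Subtype.val h2) t)
  let F := hπ.lift (f := ⟨π, hπc⟩) Φ hΦ
  have hF : ∀ p, F (π p) = Φ p := fun p => DFunLike.congr_fun (hπ.lift_comp Φ hΦ) p
  refine ⟨F.comp ((ContinuousMap.const _ 1).prodMk (ContinuousMap.id _)), ⟨⟨F, ?_, ?_⟩⟩, ?_⟩
  · rintro ⟨p, hp⟩
    obtain ⟨v, hv, rfl⟩ := hE.exists_sortedPairs hp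
    exact (hF (0, ⟨v, hv⟩)).trans (Subtype.ext (pushPath_zero hH hv))
  · intro p
    rfl
  · rintro ⟨p, hp⟩
    obtain ⟨v, hv, rfl⟩ := hE.exists_sortedPairs hp
    have := congrArg Subtype.val (hF (1, ⟨v, hv⟩))
    exact this ▸ pushPath_one_mem hE ha hη hH hv

end BlockSet

section Pushes

/-- The product of the widths of all windows of `a` consecutive entries. -/
def windowProd (a : ℕ) {L : ℕ} (r : Fin L → ℝ) : ℝ :=
  ∏ pq ∈ Finset.univ.filter fun pq : Fin L × Fin L => (pq.1 : ℕ) + a = pq.2 + 1,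
    (r pq.2 - r pq.1)

variable {a k L : ℕ}

theorem continuous_windowProd : Continuous (windowProd a (L := L)) := by
  unfold windowProd
  fun_prop

theorem windowProd_eq_zero {r : Fin L → ℝ} {p q : Fin L} (hpq : (p : ℕ) + a = q + 1)
    (h : r p = r q) : windowProd a r = 0 :=
  Finset.prod_eq_zero (i := (p, q)) (by simpa using hpq) (by simp [h])

theorem windowProd_nonneg (ha : 0 < a) {r : Fin L → ℝ} (hr : Monotone r) : 0 ≤ windowProd a r := by
  refine Finset.prod_nonneg fun pq hpq => sub_nonneg.mpr (hr (Fin.le_def.mpr ?_))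
  have := (Finset.mem_filter.mp hpq).2
  omega

theorem exists_window_lt {r : Fin L → ℝ} {μ : ℝ} (hμ : 0 < μ) (hμ1 : μ ≤ 1)
    (h : (μ ^ (L * L))⁻¹ * windowProd a r < 1) :
    ∃ p q : Fin L, (p : ℕ) + a = q + 1 ∧ r q - r p < μ := by
  by_contra! hcon
  rw [inv_mul_lt_iff₀ (by positivity), mul_one] at h
  refine absurd h (not_lt.mpr ?_)
  set S := Finset.univ.filter fun pq : Fin L × Fin L => (pq.1 : ℕ) + a = pq.2 + 1
  have hS : S.card ≤ L * L := by
    simpa using Finset.card_le_univ S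
  calc μ ^ (L * L) ≤ μ ^ S.card := pow_le_pow_of_le_one hμ.le hμ1 hS
    _ = ∏ _pq ∈ S, μ := by simp
    _ ≤ windowProd a r := Finset.prod_le_prod (fun _ _ => hμ.le) fun pq hpq =>
      hcon pq.1 pq.2 (Finset.mem_filter.mp hpq).2

/-- Move the first entry of the first tuple to `0`, at a speed controlled by the second tuple. -/
noncomputable def pushFirst (a : ℕ) {k L : ℕ} (M t : ℝ) (v : (Fin k → ℝ) × (Fin L → ℝ)) :
    (Fin k → ℝ) × (Fin L → ℝ) :=
  (fun i => if (i : ℕ) = 0 then v.1 i - t * min (v.1 i) (M * windowProd a v.2) else v.1 i, v.2)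

theorem isPush_pushFirst {η : ℝ} (ha : 0 < a) (hk : 2 ≤ k) (hη : 0 < η) (hη1 : η ≤ 1) :
    IsPush a η (pushFirst a (k := k) (L := L) (η ^ (L * L))⁻¹) where
  continuous := by
    have hw := continuous_windowProd (a := a) (L := L)
    refine Continuous.prodMk (continuous_pi fun i => ?_) (by fun_prop)
    split_ifs <;> fun_prop
  zero v _ := by simp [pushFirst]
  fix v hv p q hpq h t := by
    have hz : ∀ i, min (v.1 i) 0 = 0 := fun i => min_eq_right (hv.2.1 i).1
    simp [pushFirst, windowProd_eq_zero hpq h, hz]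
  ends v hv h t := by
    have hw : 0 ≤ (η ^ (L * L))⁻¹ * windowProd a v.2 :=
      mul_nonneg (by positivity) (windowProd_nonneg ha hv.1.2)
    rcases h with ⟨i, hi | hi⟩ | h
    · refine Or.inl ⟨i, Or.inl ?_⟩
      simp [pushFirst, hi, hw]
    · refine Or.inl ⟨⟨k - 1, by omega⟩, Or.inr ?_⟩
      have h1 : v.1 ⟨k - 1, by omega⟩ = 1 :=
        le_antisymm (hv.2.1 _).2 (hi ▸ hv.1.1 (Fin.le_def.mpr (by simp only; omega)))
      have h2 : k - 1 ≠ 0 := by omega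
      simp [pushFirst, h1, h2]
    · exact Or.inr h
  final v hv := by
    by_cases hM : (η ^ (L * L))⁻¹ * windowProd a v.2 < 1
    · obtain ⟨p, q, hpq, hlt⟩ := exists_window_lt hη hη1 hM
      refine Or.inr ⟨p, by omega, v.2 p, fun i h1 h2 => ⟨hv.1.2 (Fin.le_def.mpr h1), ?_⟩⟩
      have : v.2 i ≤ v.2 q := hv.1.2 (Fin.le_def.mpr (by omega))
      change v.2 i ≤ _
      linarith
    · refine Or.inl (Or.inl ⟨⟨0, by omega⟩, Or.inl ?_⟩)
      have h1 := min_eq_left ((hv.2.1 ⟨0, by omega⟩).2.trans (not_lt.mp hM))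
      simp only [pushFirst, if_true, h1]
      ring

/-- How far to move the `i`-th entry to the left: nothing unless `a ∣ i`, and otherwise at most to
the preceding entry, and at most `N` times the width of the window of length `a` starting at `i`. -/
noncomputable def slide (a : ℕ) {L : ℕ} (N : ℝ) (r : Fin L → ℝ) (i : Fin L) : ℝ :=
  if (i : ℕ) % a = 0 then
    min (r i - if 0 < (i : ℕ) then r ⟨i - 1, by omega⟩ else 0)
      (N * if h : (i : ℕ) + a ≤ L ∧ 0 < a then r ⟨i + a - 1, by omega⟩ - r i else 1)
  else 0

/-- Move the entries of the second tuple with index divisible by `a` to the left. -/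
noncomputable def pushSlide (a : ℕ) {k L : ℕ} (M N t : ℝ) (v : (Fin k → ℝ) × (Fin L → ℝ)) :
    (Fin k → ℝ) × (Fin L → ℝ) :=
  (v.1, fun i => v.2 i - t * min 1 (M * windowProd a v.2) * slide a N v.2 i)

theorem continuous_slide (N : ℝ) (i : Fin L) : Continuous fun r : Fin L → ℝ => slide a N r i := by
  unfold slide
  split_ifs <;> fun_prop

theorem slide_nonneg {N : ℝ} (hN : 0 ≤ N) {r : Fin L → ℝ} (hr : Monotone r) (h0 : ∀ i, 0 ≤ r i)
    (i : Fin L) : 0 ≤ slide a N r i := by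
  unfold slide
  split_ifs with h1 h2 h3 h3
  · exact le_min (sub_nonneg.mpr (hr (Fin.le_def.mpr (by simp only; omega))))
      (mul_nonneg hN (sub_nonneg.mpr (hr (Fin.le_def.mpr (by simp only; omega)))))
  · exact le_min (sub_nonneg.mpr (hr (Fin.le_def.mpr (by simp only; omega)))) (by simpa using hN)
  · exact le_min (by simpa using h0 i)
      (mul_nonneg hN (sub_nonneg.mpr (hr (Fin.le_def.mpr (by simp only; omega)))))
  · exact le_min (by simpa using h0 i) (by simpa using hN)
  · exact le_rfl

theorem slide_le_of_window {N : ℝ} (hN : 1 ≤ N) {r : Fin L → ℝ} (hr : Monotone r) (ha : 0 < a)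
    {p q i : Fin L} (hpq : (p : ℕ) + a = q + 1) (hpi : p ≤ i) (hiq : i ≤ q) :
    slide a N r i ≤ N * (r q - r p) := by
  have hw : 0 ≤ r q - r p := sub_nonneg.mpr (hr (hpi.trans hiq))
  unfold slide
  by_cases h1 : (i : ℕ) % a = 0
  · rw [if_pos h1]
    rcases eq_or_lt_of_le hpi with rfl | hlt
    · rw [dif_pos ⟨by omega, ha⟩]
      refine (min_le_right _ _).trans (le_of_eq ?_)
      congr 3
      exact Fin.ext (by simp only; omega)
    · rw [Fin.lt_def] at hlt
      rw [if_pos (by omega : 0 < (i : ℕ))]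
      refine (min_le_left _ _).trans ?_
      have h3 : r p ≤ r ⟨i - 1, by omega⟩ := hr (Fin.le_def.mpr (by simp only; omega))
      have h4 := hr hiq
      nlinarith
  · rw [if_neg h1]
    exact mul_nonneg (zero_le_one.trans hN) hw

/-- Moving the entries with index divisible by `a` to the left as far as allowed brings the first
entry to `0` or brings `a` consecutive entries close together. -/
theorem slide_final {m ε : ℕ} {η : ℝ} (hη : 0 < η) (hη1 : η ≤ 1) (hε : ε < a) (hε0 : 0 < ε)
    (hL : L = a * m + ε) {r : Fin L → ℝ} (hr : Monotone r) (hr01 : ∀ i, r i ∈ Set.Icc 0 1) :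
    (∃ i, r i - slide a η⁻¹ r i = 0) ∨
    ∃ p : ℕ, p + a ≤ L ∧ ∃ c, ∀ i : Fin L, p ≤ i → (i : ℕ) < p + a →
      r i - slide a η⁻¹ r i ∈ Set.Icc c (c + η) := by
  classical
  have hle : ∀ j ≤ m, a * j < L := fun j hj => by
    have := Nat.mul_le_mul_left a hj
    omega
  have hN : 1 ≤ η⁻¹ := (one_le_inv₀ hη).mpr hη1
  let P : ℕ → Prop := fun j => ∃ h : a * j < L,
    slide a η⁻¹ r ⟨a * j, h⟩ = r ⟨a * j, h⟩ - if 0 < a * j then r ⟨a * j - 1, by omega⟩ else 0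
  have hPm : P m := by
    refine ⟨hle m le_rfl, ?_⟩
    have h1 : ¬ (a * m + a ≤ L ∧ 0 < a) := by omega
    simp only [slide, Nat.mul_mod_right, if_true, h1, dif_neg, not_false_iff, mul_one]
    refine min_eq_left (le_trans ?_ hN)
    have h2 := (hr01 ⟨a * m, hle m le_rfl⟩).2
    split_ifs with h3
    · have h4 := (hr01 ⟨a * m - 1, by omega⟩).1
      linarith
    · linarith
  have hex : ∃ j, P j := ⟨m, hPm⟩
  obtain ⟨hjL, hj⟩ := Nat.find_spec hex
  have hjm : Nat.find hex ≤ m := Nat.find_min' hex hPm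
  rcases hj0 : Nat.find hex with _ | j
  · left
    simp only [hj0] at hj
    refine ⟨⟨a * 0, by omega⟩, ?_⟩
    rw [hj]
    simp
  · right
    simp only [hj0] at hj
    rw [hj0] at hjL hjm
    have hnot : ¬ P j := Nat.find_min hex (by omega)
    have hjL' : a * j + a < L := by rwa [Nat.mul_succ] at hjL
    have hsp : r ⟨a * j + a - 1, by omega⟩ - r ⟨a * j, by omega⟩ < η := by
      by_contra! hge
      refine hnot ⟨by omega, ?_⟩
      have h1 : a * j + a ≤ L ∧ 0 < a := by omega
      simp only [slide, Nat.mul_mod_right, if_true, h1, dif_pos, and_self]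
      refine min_eq_left ?_
      have h2 : 1 ≤ η⁻¹ * (r ⟨a * j + a - 1, by omega⟩ - r ⟨a * j, by omega⟩) := by
        rw [le_inv_mul_iff₀ hη, mul_one]
        exact hge
      refine le_trans ?_ h2
      have h3 := (hr01 ⟨a * j, by omega⟩).2
      split_ifs with h4
      · have h5 := (hr01 ⟨a * j - 1, by omega⟩).1
        linarith
      · linarith
    refine ⟨a * j + 1, by omega, r ⟨a * j, by omega⟩, fun i h1 h2 => ?_⟩
    have hlast : r ⟨a * j, by omega⟩ ≤ r ⟨a * j + a - 1, by omega⟩ :=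
      hr (Fin.le_def.mpr (by simp only; omega))
    rcases eq_or_ne (i : ℕ) (a * (j + 1)) with hi | hi
    · have hii : i = ⟨a * (j + 1), hjL⟩ := Fin.ext hi
      have h3 : 0 < a * (j + 1) := Nat.mul_pos (by omega) (by omega)
      rw [hii, hj, if_pos h3, sub_sub_cancel]
      simp only [Nat.mul_succ]
      exact ⟨hlast, by linarith⟩
    · have h3 : (i : ℕ) < a * j + a := by
        rw [Nat.mul_succ] at hi
        omega
      have h4 : (i : ℕ) % a ≠ 0 := by
        have : (i : ℕ) = (i - a * j) + a * j := by omega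
        rw [this, Nat.add_mul_mod_self_left, Nat.mod_eq_of_lt (by omega)]
        omega
      simp only [slide, h4, if_false, sub_zero]
      have h5 : r i ≤ r ⟨a * j + a - 1, by omega⟩ := hr (Fin.le_def.mpr (by simp only; omega))
      exact ⟨hr (Fin.le_def.mpr (by simp only; omega)), by linarith⟩

theorem isPush_pushSlide {m ε : ℕ} {η : ℝ} (hη : 0 < η) (hη1 : η ≤ 1) (hε : ε < a) (hε2 : 2 ≤ ε)
    (hL : L = a * m + ε) :
    IsPush a η (pushSlide a (k := k) (L := L) ((η ^ 2 / 2) ^ (L * L))⁻¹ η⁻¹) where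
  continuous := by
    have hw := continuous_windowProd (a := a) (L := L)
    have hs := continuous_slide (a := a) (L := L) η⁻¹
    refine Continuous.prodMk (by fun_prop) (continuous_pi fun i => ?_)
    have hsi := (hs i).comp (continuous_snd.comp continuous_snd :
      Continuous fun p : ℝ × ((Fin k → ℝ) × (Fin L → ℝ)) => p.2.2)
    simp only [Function.comp_def] at hsi
    fun_prop
  zero v _ := by simp [pushSlide]
  fix v _ p q hpq h t := by simp [pushSlide, windowProd_eq_zero hpq h]
  ends v hv h t := by
    rcases h with h | ⟨i, hi | hi⟩
    · exact Or.inl h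
    · refine Or.inr ⟨⟨0, by omega⟩, Or.inl ?_⟩
      have h0 : v.2 ⟨0, by omega⟩ = 0 :=
        le_antisymm (hi ▸ hv.1.2 (Fin.le_def.mpr (Nat.zero_le _))) (hv.2.2 _).1
      have hs : slide a η⁻¹ v.2 ⟨0, by omega⟩ = 0 := by
        refine le_antisymm ?_ (slide_nonneg (by positivity) hv.1.2 (fun i => (hv.2.2 i).1) _)
        simp only [slide, Nat.zero_mod, if_true, h0]
        exact (min_le_left _ _).trans (by simp)
      simp [pushSlide, h0, hs]
    · refine Or.inr ⟨⟨L - 1, by omega⟩, Or.inr ?_⟩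
      have h1 : v.2 ⟨L - 1, by omega⟩ = 1 :=
        le_antisymm (hv.2.2 _).2 (hi ▸ hv.1.2 (Fin.le_def.mpr (by simp only; omega)))
      have hmod : (L - 1) % a ≠ 0 := by
        have : L - 1 = (ε - 1) + a * m := by omega
        rw [this, Nat.add_mul_mod_self_left, Nat.mod_eq_of_lt (by omega)]
        omega
      simp [pushSlide, h1, slide, hmod]
  final v hv := by
    have hr := hv.1.2
    have ha : 0 < a := by omega
    have hN : 1 ≤ η⁻¹ := (one_le_inv₀ hη).mpr hη1
    by_cases hM : ((η ^ 2 / 2) ^ (L * L))⁻¹ * windowProd a v.2 < 1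
    · obtain ⟨p, q, hpq, hlt⟩ := exists_window_lt (by positivity) (by nlinarith) hM
      have hw : 0 ≤ ((η ^ 2 / 2) ^ (L * L))⁻¹ * windowProd a v.2 :=
        mul_nonneg (by positivity) (windowProd_nonneg ha hr)
      have hNw : η⁻¹ * (v.2 q - v.2 p) ≤ η / 2 := by
        rw [inv_mul_le_iff₀ hη]
        linarith [hlt, sq η]
      refine Or.inr ⟨p, by omega, v.2 p - η / 2, fun i h1 h2 => ?_⟩
      have hpi : p ≤ i := Fin.le_def.mpr h1
      have hiq : i ≤ q := Fin.le_def.mpr (by omega)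
      have hs := slide_le_of_window hN hr ha hpq hpi hiq
      have hs0 := slide_nonneg (a := a) (zero_le_one.trans hN) hr (fun i => (hv.2.2 i).1) i
      have hmul : 0 ≤ (((η ^ 2 / 2) ^ (L * L))⁻¹ * windowProd a v.2) * slide a η⁻¹ v.2 i :=
        mul_nonneg hw hs0
      have hmul' : (((η ^ 2 / 2) ^ (L * L))⁻¹ * windowProd a v.2) * slide a η⁻¹ v.2 i ≤
          slide a η⁻¹ v.2 i := mul_le_of_le_one_left hs0 hM.le
      simp only [pushSlide, min_eq_right hM.le, one_mul]
      have h3 := hr hpi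
      have h4 := hr hiq
      constructor <;> nlinarith
    · simp only [pushSlide, min_eq_left (not_lt.mp hM), one_mul]
      rcases slide_final hη hη1 hε (by omega) hL hr hv.2.2 with ⟨i, hi⟩ | h
      · exact Or.inl (Or.inr ⟨i, Or.inl hi⟩)
      · exact Or.inr h

end Pushes

section Contractibility

theorem contractibleSpace_blockSet_of_next {n a k : ℕ} {star : Circle1}
    (f : C(blockSet n a k Circle1 star, blockSet n a k Circle1 star))
    (hf : (ContinuousMap.id _).Homotopic f)
    (hmem : ∀ p, (f p : SymSmash n Circle1 star) ∈ blockSet n a (k + 1) Circle1 star)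
    (hsub : blockSet n a (k + 1) Circle1 star ⊆ blockSet n a k Circle1 star)
    [ContractibleSpace (blockSet n a (k + 1) Circle1 star)] :
    ContractibleSpace (blockSet n a k Circle1 star) := by
  rw [contractible_iff_id_nullhomotopic]
  let f' : C(blockSet n a k Circle1 star, blockSet n a (k + 1) Circle1 star) :=
    ⟨fun p => ⟨f p, hmem p⟩, by fun_prop⟩
  let ι : C(blockSet n a (k + 1) Circle1 star, blockSet n a k Circle1 star) :=
    ⟨Set.inclusion hsub, continuous_inclusion hsub⟩
  obtain ⟨y, hy⟩ := ((id_nullhomotopic (blockSet n a (k + 1) Circle1 star)).comp_right ι).comp_left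
    f'
  exact ⟨y, hf.trans hy⟩

theorem blockSet_succ_subset (n a k : ℕ) (X : Type) [TopologicalSpace X] (star : X) :
    blockSet n a (k + 1) X star ⊆ blockSet n a k X star := by
  rintro p ⟨y, rfl, h | ⟨Q, hQ, hle⟩⟩
  · exact star_mem_blockSet h k
  · obtain ⟨x, Q', rfl⟩ := Multiset.card_pos_iff_exists_mem.mp (by omega : 0 < Q.card) |>.imp
      fun x hx => Multiset.exists_cons_of_mem hx
    refine ⟨y, rfl, Or.inr ⟨Q', by simpa using hQ, le_trans ?_ hle⟩⟩
    exact nsmul_le_nsmul_right (Multiset.le_cons_self Q' x) a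

theorem contractibleSpace_blockSet {n a k : ℕ} (star : Circle1) (hn : 0 < n) (ha : 2 ≤ a)
    (hcond : 2 ≤ k ∨ 2 ≤ n % a) : ContractibleSpace (blockSet n a k Circle1 star) := by
  obtain ⟨E, hE⟩ := exists_isLoopParam star
  induction hd : n + 1 - a * k using Nat.strong_induction_on generalizing k with
  | _ d ih =>
  by_cases hak : a * k ≤ n
  · have hlt : n + 1 - a * (k + 1) < d := by
      rw [Nat.mul_succ]
      omega
    have hnext : ContractibleSpace (blockSet n a (k + 1) Circle1 star) :=
      ih _ hlt (hcond.imp_left fun h => by omega) rfl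
    obtain ⟨L, rfl⟩ := Nat.exists_eq_add_of_le hak
    obtain ⟨η, hη, hη1, hηn⟩ : ∃ η : ℝ, 0 < η ∧ η ≤ 1 ∧ 2 * η * ((a * k + L : ℕ) + 1) < 1 := by
      have hpos : (0 : ℝ) < (a * k + L : ℕ) + 1 := by positivity
      have hone : (1 : ℝ) ≤ (a * k + L : ℕ) + 1 := le_add_of_nonneg_left (Nat.cast_nonneg _)
      refine ⟨1 / (4 * ((a * k + L : ℕ) + 1)), by positivity, ?_, ?_⟩
      · rw [div_le_one (by positivity)]
        linarith
      · field_simp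
        norm_num
    obtain ⟨f, hf, hmem⟩ : ∃ f : C(blockSet (a * k + L) a k Circle1 star,
        blockSet (a * k + L) a k Circle1 star), (ContinuousMap.id _).Homotopic f ∧
          ∀ p, (f p : SymSmash (a * k + L) Circle1 star) ∈
            blockSet (a * k + L) a (k + 1) Circle1 star := by
      rcases hcond with hk | hε
      · exact exists_homotopy_of_isPush hE (by omega) hηn
          (isPush_pushFirst (by omega) hk hη hη1)
      · rw [Nat.mul_add_mod] at hε
        exact exists_homotopy_of_isPush hE (by omega) hηn
          (isPush_pushSlide hη hη1 (Nat.mod_lt L (by omega)) hε (Nat.div_add_mod L a).symm)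
    exact contractibleSpace_blockSet_of_next f hf hmem (blockSet_succ_subset _ _ _ _ _)
  · have hstar : ∀ p ∈ blockSet n a k Circle1 star,
        p = symProj n Circle1 star fun _ => star := by
      rintro p ⟨y, rfl, h | ⟨Q, hQ, hle⟩⟩
      · exact symProj_eq_of_star h ⟨⟨0, hn⟩, rfl⟩
      · have hcard := Multiset.card_le_card hle
        rw [Multiset.card_nsmul, hQ] at hcard
        simp at hcard
        omega
    have : Unique (blockSet n a k Circle1 star) :=
      { default := ⟨_, star_mem_blockSet (y := fun _ => star) ⟨⟨0, hn⟩, rfl⟩ k⟩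
        uniq := fun p => Subtype.ext (hstar p p.2) }
    infer_instance

theorem bind_replicate_eq (a : ℕ) {k l : ℕ} {X : Type} (x : Fin (k + l) → X) :
    (Finset.univ.val : Multiset (Fin (k + l))).bind
        (fun i => Multiset.replicate (if (i : ℕ) < k then a else 1) (x i)) =
      a • Multiset.map (x ∘ Fin.castAdd l) Finset.univ.val +
        Multiset.map (x ∘ Fin.natAdd k) Finset.univ.val := by
  have hbind : (Finset.univ.val : Multiset (Fin (k + l))).bind
      (fun i => Multiset.replicate (if (i : ℕ) < k then a else 1) (x i)) =
      ∑ i : Fin (k + l), Multiset.replicate (if (i : ℕ) < k then a else 1) (x i) := rfl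
  rw [hbind, Fin.sum_univ_add, map_univ_eq_sum, map_univ_eq_sum, Finset.smul_sum]
  simp [Multiset.nsmul_singleton]

theorem stratum_eq_blockSet (a : ℕ) {k l : ℕ} {X : Type} [TopologicalSpace X] (star : X) :
    stratum (a * k + l) (k + l) (fun i => if (i : ℕ) < k then a else 1) X star =
      blockSet (a * k + l) a k X star := by
  have hfn : ∀ (m : ℕ) (S : Multiset X), S.card = m →
      ∃ q : Fin m → X, Multiset.map q Finset.univ.val = S := by
    rintro m S rfl
    induction S using Quot.inductionOn with
    | _ L => exact ⟨L.get, (Fin.univ_val_map _).trans (congrArg _ (List.ofFn_get L))⟩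
  ext p
  constructor
  · rintro ⟨y, rfl, x, hx⟩
    refine ⟨y, rfl, Or.inr ⟨Multiset.map (x ∘ Fin.castAdd l) Finset.univ.val, by simp, ?_⟩⟩
    rw [hx, bind_replicate_eq]
    exact Multiset.le_add_right _ _
  · rintro ⟨y, rfl, ⟨i, hi⟩ | ⟨Q, hQ, hle⟩⟩
    · refine ⟨fun _ => star, symProj_eq_of_star ⟨i, hi⟩ ⟨i, rfl⟩, fun _ => star, ?_⟩
      rw [bind_replicate_eq]
      simp [Multiset.map_const', Multiset.nsmul_replicate,
        Multiset.replicate_add]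
    · obtain ⟨R, hR⟩ := Multiset.le_iff_exists_add.mp hle
      have hRcard : R.card = l := by
        have := congrArg Multiset.card hR
        simp only [Multiset.card_map, Finset.card_val, Finset.card_univ, Fintype.card_fin,
          Multiset.card_add, Multiset.card_nsmul, hQ] at this
        simpa using this.symm
      obtain ⟨q, rfl⟩ := hfn k Q hQ
      obtain ⟨r, rfl⟩ := hfn l R hRcard
      refine ⟨y, rfl, Fin.append q r, ?_⟩
      rw [bind_replicate_eq, hR]
      congr 3 <;> funext i <;> simp

end Contractibility

/-- if `k ≥ 2` or `ε ≥ 2` (where `l = a·m + ε`, `0 ≤ ε ≤ a−1`), the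
closed stratum `Σ_{(a^k,1^l)}` of `(S^1)^{(ak+l)}` is contractible. -/
theorem stratum_ak_ones_contractible (a k l m ε : ℕ)
    (ha : 2 ≤ a) (hk : 1 ≤ k) (hl : 1 ≤ l)
    (hlme : l = a * m + ε) (hε : ε ≤ a - 1) (hcond : 2 ≤ k ∨ 2 ≤ ε)
    (star : Circle1) :
    ContractibleSpace
      ↥(stratum (a * k + l) (k + l)
        (fun i => if (i : ℕ) < k then a else 1) Circle1 star) := by
  rw [stratum_eq_blockSet]
  refine contractibleSpace_blockSet star (by omega) ha (hcond.imp_right fun h => ?_)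
  rw [Nat.mul_add_mod, hlme, Nat.mul_add_mod, Nat.mod_eq_of_lt (by omega)]
  exact h
end

section
/- Let a ≥ 2 and l ≥ 1 be integers, and write l = a·m + ε with integers m ≥ 0 and ε ∈ {0,1}. Then the closed stratum Σ_{(a,1^l)}^{S^1} of the n-fold symmetric smash product (S^1)^{(n)}, where n = a + l and the partition (a,1^l) consists of one part equal to a and l parts equal to 1, is homotopy equivalent to the sphere S^{2m+ε+1}. -/
/-- `HasGap a n T`: some `a - 1` consecutive integers of `[1, n - 1]` avoid `T`. -/
def HasGap (a n : ℕ) (T : Set ℕ) : Prop :=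
  ∃ w, 1 ≤ w ∧ w + a ≤ n + 1 ∧ ∀ j ∈ T, w ≤ j → w + a ≤ j + 1

/-- The map fixing the multiples of `a` and sending every other `i` to the least integer of its
block between consecutive multiples of `a`. -/
def collapse (a i : ℕ) : ℕ := if i % a = 0 then i else a * (i / a) + 1

/-- Apply `collapse a` to the integers up to `k` only. -/
def partialCollapse (a k i : ℕ) : ℕ := if i ≤ k then collapse a i else i

theorem HasGap.mono {a n : ℕ} {S T : Set ℕ} (h : HasGap a n T) (hST : S ⊆ T) : HasGap a n S := by
  obtain ⟨w, h1, h2, h3⟩ := h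
  exact ⟨w, h1, h2, fun j hj => h3 j (hST hj)⟩

theorem collapse_eq_self {a i : ℕ} (h : i % a = 0 ∨ i % a = 1) : collapse a i = i := by
  have := Nat.div_add_mod i a
  unfold collapse
  split_ifs with h0
  · rfl
  · omega

theorem collapse_le (a i : ℕ) : collapse a i ≤ i := by
  have := Nat.div_add_mod i a
  unfold collapse
  split_ifs with h0 <;> omega

theorem collapse_mod {a : ℕ} (ha : 2 ≤ a) (i : ℕ) :
    collapse a i % a = 0 ∨ collapse a i % a = 1 := by
  unfold collapse
  split_ifs with h0
  · exact Or.inl h0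
  · right
    rw [Nat.mul_add_mod, Nat.mod_eq_of_lt (by omega)]

theorem collapse_eq_zero_iff {a i : ℕ} : collapse a i = 0 ↔ i = 0 := by
  unfold collapse
  split_ifs with h0
  · rfl
  · constructor
    · intro h; simp at h
    · rintro rfl; simp at h0

theorem partialCollapse_le (a k i : ℕ) : partialCollapse a k i ≤ i := by
  unfold partialCollapse
  split_ifs
  · exact collapse_le a i
  · exact le_rfl

theorem partialCollapse_eq_self {a i : ℕ} (k : ℕ) (h : i % a = 0 ∨ i % a = 1) :
    partialCollapse a k i = i := by
  unfold partialCollapse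
  split_ifs
  · exact collapse_eq_self h
  · rfl

theorem partialCollapse_eq_zero_iff {a k i : ℕ} : partialCollapse a k i = 0 ↔ i = 0 := by
  unfold partialCollapse
  split_ifs
  · exact collapse_eq_zero_iff
  · rfl

theorem partialCollapse_zero (a i : ℕ) : partialCollapse a 0 i = i := by
  unfold partialCollapse
  split_ifs with h
  · obtain rfl : i = 0 := by omega
    exact collapse_eq_zero_iff.2 rfl
  · rfl

/-- Between `a * p + 2` and `a * (p + 1)`, only the latter is `0` or `1` modulo `a`. -/
theorem eq_of_mod_of_mem_Icc {a p u : ℕ} (hu : u % a = 0 ∨ u % a = 1) (h1 : a * p + 2 ≤ u)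
    (h2 : u ≤ a * (p + 1)) : u = a * (p + 1) := by
  have hd := Nat.div_add_mod u a
  have hp : p < u / a := Nat.lt_of_mul_lt_mul_left (a := a) (by omega)
  have : a * (p + 1) ≤ a * (u / a) := Nat.mul_le_mul_left a hp
  omega

theorem hasGap_image_partialCollapse_union {a n k : ℕ} (ha : 2 ≤ a) {T : Set ℕ}
    (h : HasGap a n (partialCollapse a k '' T)) :
    HasGap a n (partialCollapse a k '' T ∪ partialCollapse a (k + 1) '' T) := by
  obtain ⟨w, h1, h2, h3⟩ := h
  by_cases hc : k + 1 ∈ T ∧ w ≤ collapse a (k + 1) ∧ collapse a (k + 1) + 1 < w + a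
  swap
  · refine ⟨w, h1, h2, ?_⟩
    rintro j (hj | ⟨t, ht, rfl⟩) hw
    · exact h3 j hj hw
    · by_cases htk : t = k + 1
      · subst htk
        simp only [partialCollapse, le_refl, if_true] at hw ⊢
        by_contra hlt
        exact hc ⟨ht, hw, by omega⟩
      · have he : partialCollapse a (k + 1) t = partialCollapse a k t := by
          unfold partialCollapse
          split_ifs <;> first | rfl | omega
        rw [he] at hw ⊢
        exact h3 _ ⟨t, ht, rfl⟩ hw
  obtain ⟨hkT, hwc, hcw⟩ := hc
  have hk : w + a ≤ k + 1 + 1 := by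
    refine h3 (k + 1) ⟨k + 1, hkT, by simp [partialCollapse]⟩ (hwc.trans (collapse_le a _))
  have hmod : (k + 1) % a ≠ 0 ∧ (k + 1) % a ≠ 1 := by
    constructor <;> intro h0
    · rw [collapse_eq_self (Or.inl h0)] at hcw; omega
    · rw [collapse_eq_self (Or.inr h0)] at hcw; omega
  have hcol : collapse a (k + 1) = a * ((k + 1) / a) + 1 := by
    simp [collapse, hmod.1]
  have hd := Nat.div_add_mod (k + 1) a
  have hlt := Nat.mod_lt (k + 1) (by omega : a > 0)
  rw [hcol] at hwc hcw
  obtain ⟨p, hp⟩ : ∃ p, (k + 1) / a = p + 1 := by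
    refine Nat.exists_eq_succ_of_ne_zero fun h0 => ?_
    rw [h0] at hd hwc
    omega
  rw [hp] at hcol hwc hcw hd
  have hexp : a * (p + 1) = a * p + a := by ring
  refine ⟨a * p + 2, by omega, by omega, ?_⟩
  have key : ∀ t ∈ T, a * p + 2 ≤ partialCollapse a k t →
      a * p + 2 + a ≤ partialCollapse a k t + 1 := by
    intro t ht hw
    by_contra hlt'
    by_cases htk : t ≤ k
    · have he : partialCollapse a k t = collapse a t := by simp [partialCollapse, htk]
      have := eq_of_mod_of_mem_Icc (collapse_mod ha t) (he ▸ hw) (by omega)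
      have := h3 _ ⟨t, ht, rfl⟩ (by omega)
      omega
    · have he : partialCollapse a k t = t := by simp [partialCollapse, htk]
      omega
  rintro j (⟨t, ht, rfl⟩ | ⟨t, ht, rfl⟩) hw
  · exact key t ht hw
  · by_cases htk : t = k + 1
    · subst htk
      have he : partialCollapse a (k + 1) (k + 1) = collapse a (k + 1) := by
        simp [partialCollapse]
      omega
    · have he : partialCollapse a (k + 1) t = partialCollapse a k t := by
        unfold partialCollapse
        split_ifs <;> first | rfl | omega
      rw [he] at hw ⊢
      exact key t ht hw

theorem HasGap.image_partialCollapse {a n : ℕ} (ha : 2 ≤ a) {T : Set ℕ} (h : HasGap a n T)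
    (k : ℕ) : HasGap a n (partialCollapse a k '' T) := by
  induction k with
  | zero => simpa [Set.image_congr (fun i _ => partialCollapse_zero a i)] using h
  | succ k ih => exact (hasGap_image_partialCollapse_union ha ih).mono Set.subset_union_right

/-- Every window of `a - 1` consecutive positive integers contains one that is `0` or `1`
modulo `a`. -/
theorem exists_mod_mem_window {a : ℕ} (ha : 2 ≤ a) (w : ℕ) :
    ∃ v, w ≤ v ∧ v + 1 < w + a ∧ (v % a = 0 ∨ v % a = 1) := by
  by_cases hw : w % a = 0 ∨ w % a = 1
  · exact ⟨w, le_rfl, by omega, hw⟩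
  · have hd := Nat.div_add_mod w a
    have hlt := Nat.mod_lt w (by omega : a > 0)
    have hexp : a * (w / a + 1) = a * (w / a) + a := by ring
    exact ⟨a * (w / a + 1), by omega, by omega, Or.inl (Nat.mul_mod_right _ _)⟩

/-- Removing one element `v` from the integers of `[1, n - 1]` that are `0` or `1` modulo `a`
creates a gap. -/
theorem hasGap_of_notMem {a n m ε : ℕ} (hn : n = a * (m + 1) + ε)
    (hε : ε = 0 ∨ ε = 1) {T : Set ℕ} {v : ℕ} (hv1 : 1 ≤ v) (hvn : v < n)
    (hv : v % a = 0 ∨ v % a = 1) (hvT : v ∉ T) (hT : ∀ t ∈ T, t % a = 0 ∨ t % a = 1) :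
    HasGap a n T := by
  have hd := Nat.div_add_mod v a
  rcases hv with hv | hv
  · obtain ⟨p, hp⟩ : ∃ p, v / a = p + 1 := by
      refine Nat.exists_eq_succ_of_ne_zero fun h0 => ?_
      rw [h0] at hd
      omega
    rw [hp] at hd
    have hexp : a * (p + 1) = a * p + a := by ring
    refine ⟨a * p + 2, by omega, by omega, fun t ht h1 => ?_⟩
    by_contra h2
    have := eq_of_mod_of_mem_Icc (hT t ht) h1 (by omega)
    exact hvT (by rwa [← hd, hv, add_zero, ← this])
  · rw [hv] at hd
    have hq : v / a < m + 1 := by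
      refine Nat.lt_of_mul_lt_mul_left (a := a) ?_
      omega
    have hle : a * (v / a + 1) ≤ a * (m + 1) := Nat.mul_le_mul_left a hq
    have hexp : a * (v / a + 1) = a * (v / a) + a := by ring
    refine ⟨a * (v / a) + 1, by omega, by omega, fun t ht h1 => ?_⟩
    by_contra h2
    have hne : t ≠ v := fun h => hvT (h ▸ ht)
    have := eq_of_mod_of_mem_Icc (hT t ht) (p := v / a) (by omega) (by omega)
    omega

/-- The gap vectors of `n` ordered points of `[0, 1]`, some `a` consecutive of which agree. -/
def gapSpace (a n : ℕ) : Set (Fin (n + 1) → ℝ) :=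
  {g | (∀ i, 0 ≤ g i) ∧ ∑ i, g i = 1 ∧ HasGap a n (Fin.val '' Function.support g)}

/-- The first or the last gap vanishes. -/
def AtEnd {n : ℕ} (g : Fin (n + 1) → ℝ) : Prop := g 0 = 0 ∨ g (Fin.last n) = 0

/-- Pushforward of a gap vector along a map of indices. -/
def push {n : ℕ} (e : ℕ → ℕ) (g : Fin (n + 1) → ℝ) (j : Fin (n + 1)) : ℝ :=
  ∑ i : Fin (n + 1), if e i = j then g i else 0

section push

variable {n : ℕ} {e : ℕ → ℕ} {g : Fin (n + 1) → ℝ}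

theorem continuous_push (e : ℕ → ℕ) : Continuous (push e : (Fin (n + 1) → ℝ) → _) := by
  refine continuous_pi fun j => continuous_finsetSum _ fun i _ => ?_
  split_ifs
  · exact continuous_apply i
  · exact continuous_const

theorem push_nonneg (hg : ∀ i, 0 ≤ g i) (j : Fin (n + 1)) : 0 ≤ push e g j :=
  Finset.sum_nonneg fun i _ => by
    split_ifs
    · exact hg i
    · exact le_rfl

theorem sum_push (he : ∀ i, e i ≤ i) : ∑ j, push e g j = ∑ i, g i := by
  unfold push
  rw [Finset.sum_comm]
  refine Finset.sum_congr rfl fun i _ => ?_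
  have hlt : e i < n + 1 := (he i).trans_lt i.2
  have : ∀ j : Fin (n + 1), (e i = j) ↔ (⟨e i, hlt⟩ : Fin (n + 1)) = j := fun j => by
    rw [Fin.ext_iff]
  simp [this]

theorem push_apply_eq {j : Fin (n + 1)} (h : ∀ i : Fin (n + 1), e i = j ↔ i = j) :
    push e g j = g j := by
  simp [push, h]

theorem push_eq_self (h : ∀ i : Fin (n + 1), g i ≠ 0 → e i = i) : push e g = g := by
  funext j
  have : ∀ i : Fin (n + 1), (if e i = j then g i else 0) = if i = j then g i else 0 := by
    intro i
    by_cases hi : g i = 0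
    · simp [hi]
    · simp [h i hi, Fin.ext_iff]
  simp [push, this]

theorem support_push_subset :
    Fin.val '' Function.support (push e g) ⊆ e '' (Fin.val '' Function.support g) := by
  rintro _ ⟨j, hj, rfl⟩
  obtain ⟨i, -, hi⟩ := Finset.exists_ne_zero_of_sum_ne_zero hj
  by_cases h : e i = j
  · rw [if_pos h] at hi
    exact ⟨i, ⟨i, hi, rfl⟩, h⟩
  · simp [h] at hi

end push

section gapSpace

variable {a n : ℕ}

theorem isCompact_gapSpace (a n : ℕ) : IsCompact (gapSpace a n) := by
  have hclosed : IsClosed {g : Fin (n + 1) → ℝ | HasGap a n (Fin.val '' Function.support g)} := by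
    have : {g : Fin (n + 1) → ℝ | HasGap a n (Fin.val '' Function.support g)} =
        ⋃ w ∈ {w | 1 ≤ w ∧ w + a ≤ n + 1},
          ⋂ j : Fin (n + 1), {g | w ≤ j → ¬ (w + a ≤ j + 1) → g j = 0} := by
      ext g
      simp only [HasGap, Set.mem_ofPred_eq, Set.mem_iUnion, Set.mem_iInter, exists_prop, and_assoc]
      refine exists_congr fun w => and_congr_right fun _ => and_congr_right fun _ => ?_
      constructor
      · intro h j h1 h2
        by_contra h3
        exact h2 (h j ⟨j, h3, rfl⟩ h1)
      · rintro h _ ⟨j, hj, rfl⟩ h1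
        by_contra h2
        exact hj (h j h1 h2)
    rw [this]
    refine Set.Finite.isClosed_biUnion ?_ fun w _ => isClosed_iInter fun j => ?_
    · exact (Set.finite_Iic (n + 1)).subset fun w hw => by
        have := hw.2
        simp only [Set.mem_Iic]
        omega
    · by_cases h : w ≤ j ∧ ¬ (w + a ≤ j + 1)
      · simp only [h.1, h.2, not_false_eq_true, forall_const]
        exact isClosed_eq (continuous_apply j) continuous_const
      · have : {g : Fin (n + 1) → ℝ | w ≤ j → ¬ (w + a ≤ j + 1) → g j = 0} = Set.univ :=
          Set.eq_univ_of_forall fun g h1 h2 => absurd ⟨h1, h2⟩ h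
        rw [this]
        exact isClosed_univ
  have : gapSpace a n = stdSimplex ℝ (Fin (n + 1)) ∩
      {g : Fin (n + 1) → ℝ | HasGap a n (Fin.val '' Function.support g)} := by
    ext g
    simp [gapSpace, stdSimplex, and_assoc]
  rw [this]
  exact (isCompact_stdSimplex ℝ _).inter_right hclosed

instance : CompactSpace (gapSpace a n) := isCompact_iff_compactSpace.1 (isCompact_gapSpace a n)

theorem push_partialCollapse_mem (ha : 2 ≤ a) {g : Fin (n + 1) → ℝ} (hg : g ∈ gapSpace a n)
    (k : ℕ) : push (partialCollapse a k) g ∈ gapSpace a n :=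
  ⟨push_nonneg hg.1, (sum_push (partialCollapse_le a k)).trans hg.2.1,
    (hg.2.2.image_partialCollapse ha k).mono support_push_subset⟩

theorem push_partialCollapse_zero (k : ℕ) (g : Fin (n + 1) → ℝ) :
    push (partialCollapse a k) g 0 = g 0 :=
  push_apply_eq fun i => by simp [partialCollapse_eq_zero_iff]

theorem push_partialCollapse_last (hn : n % a = 0 ∨ n % a = 1) (k : ℕ) (g : Fin (n + 1) → ℝ) :
    push (partialCollapse a k) g (Fin.last n) = g (Fin.last n) := by
  refine push_apply_eq fun i => ⟨fun h => ?_, ?_⟩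
  · have h1 := partialCollapse_le a k i
    have h2 := i.2
    rw [Fin.val_last] at h
    exact Fin.ext (by rw [Fin.val_last]; omega)
  · rintro rfl
    exact partialCollapse_eq_self k hn

/-- The push along `partialCollapse a k`, as a self-map of `gapSpace a n`. -/
def collapseGap (ha : 2 ≤ a) (k : ℕ) (g : gapSpace a n) : gapSpace a n :=
  ⟨push (partialCollapse a k) g, push_partialCollapse_mem ha g.2 k⟩

theorem continuous_collapseGap (ha : 2 ≤ a) (k : ℕ) :
    Continuous (collapseGap ha k : gapSpace a n → gapSpace a n) :=
  ((continuous_push _).comp continuous_subtype_val).subtype_mk _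

theorem collapseGap_zero (ha : 2 ≤ a) (g : gapSpace a n) : collapseGap ha 0 g = g :=
  Subtype.ext (push_eq_self fun i _ => partialCollapse_zero a i)

theorem atEnd_collapseGap (ha : 2 ≤ a) (hn : n % a = 0 ∨ n % a = 1) (k : ℕ) (g : gapSpace a n) :
    AtEnd (collapseGap ha k g).1 ↔ AtEnd g.1 := by
  simp only [AtEnd, collapseGap, push_partialCollapse_zero, push_partialCollapse_last hn]

/-- Linear interpolation between consecutive partial collapses. -/
def collapseHomotopy (ha : 2 ≤ a) (k : ℕ) (p : unitInterval × gapSpace a n) : gapSpace a n :=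
  ⟨(1 - (p.1 : ℝ)) • push (partialCollapse a k) p.2.1 +
      (p.1 : ℝ) • push (partialCollapse a (k + 1)) p.2.1, by
    obtain ⟨t, g⟩ := p
    have h0 := push_partialCollapse_mem ha g.2 k
    have h1 := push_partialCollapse_mem ha g.2 (k + 1)
    refine ⟨fun i => ?_, ?_, ?_⟩
    · exact add_nonneg (mul_nonneg (sub_nonneg.2 t.2.2) (h0.1 i)) (mul_nonneg t.2.1 (h1.1 i))
    · simp only [Pi.add_apply, Pi.smul_apply, smul_eq_mul, Finset.sum_add_distrib,
        ← Finset.mul_sum, h0.2.1, h1.2.1]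
      ring
    · refine (hasGap_image_partialCollapse_union ha
        (g.2.2.2.image_partialCollapse ha k)).mono ?_
      refine Set.Subset.trans ?_ (Set.union_subset_union support_push_subset support_push_subset)
      rw [← Set.image_union]
      refine Set.image_mono fun i hi => ?_
      by_contra hcon
      simp only [Set.mem_union, Function.mem_support, not_or, not_not] at hcon
      exact hi (by simp [hcon.1, hcon.2])⟩

theorem continuous_collapseHomotopy (ha : 2 ≤ a) (k : ℕ) :
    Continuous (collapseHomotopy ha k : unitInterval × gapSpace a n → gapSpace a n) := by
  refine Continuous.subtype_mk ?_ _
  have h (k : ℕ) : Continuous fun p : unitInterval × gapSpace a n =>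
      push (partialCollapse a k) p.2.1 :=
    (continuous_push _).comp (continuous_subtype_val.comp continuous_snd)
  have ht : Continuous fun p : unitInterval × gapSpace a n => (p.1 : ℝ) :=
    continuous_subtype_val.comp continuous_fst
  exact ((continuous_const.sub ht).smul (h k)).add (ht.smul (h (k + 1)))

theorem atEnd_collapseHomotopy (ha : 2 ≤ a) (hn : n % a = 0 ∨ n % a = 1) (k : ℕ) (t : unitInterval)
    (g : gapSpace a n) : AtEnd (collapseHomotopy ha k (t, g)).1 ↔ AtEnd g.1 := by
  simp only [AtEnd, collapseHomotopy, Pi.add_apply, Pi.smul_apply, smul_eq_mul,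
    push_partialCollapse_zero, push_partialCollapse_last hn, ← add_mul, sub_add_cancel, one_mul]

variable {S : Type*} [TopologicalSpace S] {π : gapSpace a n → S}

/-- On the quotient collapsing the vectors with a vanishing end gap, every partial collapse is
homotopic to the identity. -/
theorem exists_homotopic_id_collapseGap (ha : 2 ≤ a) (hn : n % a = 0 ∨ n % a = 1)
    (hq : Topology.IsQuotientMap π)
    (hπ : ∀ g g', π g = π g' ↔ g = g' ∨ (AtEnd g.1 ∧ AtEnd g'.1)) (k : ℕ) :
    ∃ f : C(S, S), (∀ g, f (π g) = π (collapseGap ha k g)) ∧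
      ContinuousMap.Homotopic (ContinuousMap.id S) f := by
  induction k with
  | zero =>
    refine ⟨ContinuousMap.id S, fun g => ?_, ContinuousMap.Homotopic.refl _⟩
    rw [collapseGap_zero, ContinuousMap.id_apply]
  | succ k ih =>
    obtain ⟨f, hf, hhom⟩ := ih
    set K : unitInterval × S → S := fun p =>
      π (collapseHomotopy ha k (p.1, Function.surjInv hq.surjective p.2))
    have hK (t : unitInterval) (g : gapSpace a n) :
        K (t, π g) = π (collapseHomotopy ha k (t, g)) := by
      rcases (hπ _ _).1 (Function.surjInv_eq hq.surjective (π g)) with h | h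
      · simp only [K, h]
      · exact (hπ _ _).2 (Or.inr ⟨(atEnd_collapseHomotopy ha hn k t _).2 h.1,
          (atEnd_collapseHomotopy ha hn k t _).2 h.2⟩)
    have hKc : Continuous K := by
      refine hq.continuous_lift_prod_right ?_
      simp only [hK]
      exact hq.continuous.comp (continuous_collapseHomotopy ha k)
    refine ⟨⟨fun s => K (1, s), by fun_prop⟩, fun g => ?_, hhom.trans ⟨⟨⟨K, hKc⟩, ?_, ?_⟩⟩⟩
    · simp only [ContinuousMap.coe_mk, hK]
      congr 1
      exact Subtype.ext (by simp [collapseHomotopy, collapseGap])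
    · intro s
      obtain ⟨g, rfl⟩ := hq.surjective s
      simp only [hK, hf]
      congr 1
      exact Subtype.ext (by simp [collapseHomotopy, collapseGap])
    · intro s
      rfl

end gapSpace

section spine

variable {a n m ε : ℕ}

/-- The interior indices that are `0` or `1` modulo `a`. -/
def IsSpine (a n : ℕ) (j : Fin (n + 1)) : Prop :=
  j ≠ 0 ∧ j ≠ Fin.last n ∧ ((j : ℕ) % a = 0 ∨ (j : ℕ) % a = 1)

instance (a n : ℕ) : DecidablePred (IsSpine a n) := fun _ => inferInstanceAs (Decidable (_ ∧ _))

/-- The indices satisfying `IsSpine a n`, as a type. -/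
abbrev Spine (a n : ℕ) : Type := {j : Fin (n + 1) // IsSpine a n j}

theorem count_mod_eq (ha : 2 ≤ a) (k : ℕ) :
    Nat.count (fun i => i % a = 0 ∨ i % a = 1) (a * k) = 2 * k := by
  induction k with
  | zero => simp
  | succ k ih =>
    have h2 : Nat.count (fun i => i % a = 0 ∨ i % a = 1) a = 2 := by
      rw [Nat.count_eq_card_filter_range]
      have : (Finset.range a).filter (fun i => i % a = 0 ∨ i % a = 1) = Finset.range 2 := by
        ext i
        simp only [Finset.mem_filter, Finset.mem_range]
        constructor
        · rintro ⟨h1, h2⟩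
          rw [Nat.mod_eq_of_lt h1] at h2
          omega
        · intro h
          rw [Nat.mod_eq_of_lt (by omega)]
          omega
      rw [this, Finset.card_range]
    rw [Nat.mul_succ, Nat.count_add, ih]
    simp only [Nat.mul_add_mod]
    rw [h2]
    ring

theorem card_spine (ha : 2 ≤ a) (hn : n = a * (m + 1) + ε) (hε : ε = 0 ∨ ε = 1) :
    Fintype.card (Spine a n) = 2 * m + ε + 1 := by
  have hcount : Nat.count (fun i => i % a = 0 ∨ i % a = 1) n = 2 * (m + 1) + ε := by
    rw [hn, Nat.count_add, count_mod_eq ha]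
    rcases hε with rfl | rfl
    · simp
    · simp [Nat.count_succ]
  rw [Nat.count_eq_card_filter_range] at hcount
  have hpos : 0 < n := by rw [hn]; positivity
  have h0 : 0 ∈ (Finset.range n).filter (fun i => i % a = 0 ∨ i % a = 1) := by simp [hpos]
  have hcard := Finset.card_erase_of_mem h0
  rw [hcount] at hcard
  rw [Fintype.card_subtype, ← Finset.card_map Fin.valEmbedding]
  have : (Finset.univ.filter (IsSpine a n)).map Fin.valEmbedding =
      ((Finset.range n).filter (fun i => i % a = 0 ∨ i % a = 1)).erase 0 := by
    ext i
    simp only [Finset.mem_map, Finset.mem_filter, Finset.mem_univ, true_and, Finset.mem_erase,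
      Finset.mem_range, Fin.valEmbedding_apply, IsSpine]
    constructor
    · rintro ⟨j, ⟨h1, h2, h3⟩, rfl⟩
      have := j.2
      have h4 : (j : ℕ) ≠ n := fun h => h2 (Fin.ext (by simpa using h))
      exact ⟨fun h => h1 (Fin.ext (by simpa using h)), by omega, h3⟩
    · rintro ⟨h1, h2, h3⟩
      exact ⟨⟨i, by omega⟩, ⟨fun h => h1 (by simpa [Fin.ext_iff] using h),
        fun h => by simp [Fin.ext_iff] at h; omega, h3⟩, rfl⟩
  rw [this, hcard]
  omega

/-- A sum over all indices of a vector supported on the spine and the two ends. -/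
theorem sum_eq_of_support_spine (hn : 0 < n) {g : Fin (n + 1) → ℝ}
    (hg : ∀ j, g j ≠ 0 → (j : ℕ) % a = 0 ∨ (j : ℕ) % a = 1) :
    ∑ j, g j = g 0 + g (Fin.last n) + ∑ v : Spine a n, g v := by
  have h0l : (0 : Fin (n + 1)) ≠ Fin.last n := by
    intro h
    simp [Fin.ext_iff] at h
    omega
  have hspine : ∑ j with IsSpine a n j, g j = ∑ v : Spine a n, g v :=
    Finset.sum_subtype _ (by simp) g
  rw [← Finset.sum_filter_not_add_sum_filter Finset.univ (IsSpine a n) g, hspine]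
  congr 1
  · rw [← Finset.sum_pair (f := g) h0l]
    symm
    refine Finset.sum_subset ?_ ?_
    · intro j hj
      simp only [Finset.mem_insert, Finset.mem_singleton] at hj
      rcases hj with rfl | rfl <;> simp [IsSpine]
    · intro j hj hj'
      simp only [Finset.mem_insert, Finset.mem_singleton, not_or] at hj'
      by_contra h
      exact (Finset.mem_filter.1 hj).2 ⟨hj'.1, hj'.2, hg j h⟩

variable [Nonempty (Spine a n)]

/-- The least coordinate of a vector indexed by the spine. -/
noncomputable def least (h : Spine a n → ℝ) : ℝ := Finset.univ.inf' Finset.univ_nonempty h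

theorem least_le (h : Spine a n → ℝ) (v : Spine a n) : least h ≤ h v :=
  Finset.inf'_le _ (Finset.mem_univ v)

theorem exists_eq_least (h : Spine a n → ℝ) : ∃ v, h v = least h := by
  obtain ⟨v, -, hv⟩ := Finset.exists_mem_eq_inf' Finset.univ_nonempty h
  exact ⟨v, hv.symm⟩

theorem continuous_least : Continuous (least : (Spine a n → ℝ) → ℝ) :=
  Continuous.finset_inf'_apply _ fun v _ => continuous_apply v

/-- The total weight of the gap vector with last entry `1` attached to `h`. -/
noncomputable def weight (h : Spine a n → ℝ) : ℝ :=
  1 + Real.exp (least h) + ∑ v, (h v - least h)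

theorem weight_pos (h : Spine a n → ℝ) : 0 < weight h := by
  have := Real.exp_pos (least h)
  have : 0 ≤ ∑ v, (h v - least h) := Finset.sum_nonneg fun v _ => sub_nonneg.2 (least_le h v)
  unfold weight
  linarith

theorem continuous_weight : Continuous (weight : (Spine a n → ℝ) → ℝ) := by
  unfold weight
  have := continuous_least (a := a) (n := n)
  fun_prop

/-- The gap vector supported on the spine and the ends whose logarithmic coordinates are `h`. -/
noncomputable def spineGap (h : Spine a n → ℝ) (j : Fin (n + 1)) : ℝ :=
  if j = 0 then Real.exp (least h) / weight h
  else if j = Fin.last n then 1 / weight h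
  else if hj : IsSpine a n j then (h ⟨j, hj⟩ - least h) / weight h
  else 0

theorem spineGap_zero (h : Spine a n → ℝ) : spineGap h 0 = Real.exp (least h) / weight h := by
  simp [spineGap]

theorem spineGap_last (hn : 0 < n) (h : Spine a n → ℝ) :
    spineGap h (Fin.last n) = 1 / weight h := by
  have : Fin.last n ≠ 0 := fun h => by
    simp [Fin.ext_iff] at h
    omega
  simp [spineGap, this]

theorem spineGap_spine (h : Spine a n → ℝ) (v : Spine a n) :
    spineGap h v = (h v - least h) / weight h := by
  simp [spineGap, v.2, v.2.1, v.2.2.1]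

theorem continuous_spineGap : Continuous (spineGap : (Spine a n → ℝ) → _) := by
  refine continuous_pi fun j => ?_
  have h1 := continuous_least (a := a) (n := n)
  have h2 := continuous_weight (a := a) (n := n)
  have h3 : ∀ h : Spine a n → ℝ, weight h ≠ 0 := fun h => (weight_pos h).ne'
  unfold spineGap
  split_ifs
  · exact (Real.continuous_exp.comp h1).div h2 h3
  · exact continuous_const.div h2 h3
  · exact ((continuous_apply _).sub h1).div h2 h3
  · exact continuous_const

theorem mod_of_spineGap_ne_zero (hn : n % a = 0 ∨ n % a = 1) (h : Spine a n → ℝ)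
    (j : Fin (n + 1)) (hj : spineGap h j ≠ 0) : (j : ℕ) % a = 0 ∨ (j : ℕ) % a = 1 := by
  by_contra hcon
  refine hj ?_
  unfold spineGap
  rw [if_neg, if_neg, dif_neg]
  · exact fun h => hcon h.2.2
  · rintro rfl
    exact hcon hn
  · rintro rfl
    simp at hcon

theorem spineGap_mem (ha : 2 ≤ a) (hn : n = a * (m + 1) + ε) (hε : ε = 0 ∨ ε = 1)
    (h : Spine a n → ℝ) : spineGap h ∈ gapSpace a n := by
  have hpos : 0 < n := by rw [hn]; positivity
  have hmod : n % a = 0 ∨ n % a = 1 := by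
    rw [hn, Nat.mul_add_mod, Nat.mod_eq_of_lt (by omega)]
    exact hε
  have hw := weight_pos h
  refine ⟨fun j => ?_, ?_, ?_⟩
  · unfold spineGap
    split_ifs
    · positivity
    · positivity
    · exact div_nonneg (sub_nonneg.2 (least_le h _)) hw.le
    · exact le_rfl
  · rw [sum_eq_of_support_spine hpos (mod_of_spineGap_ne_zero hmod h)]
    simp only [spineGap_zero, spineGap_last hpos, spineGap_spine]
    rw [← Finset.sum_div, ← add_div, ← add_div, div_eq_one_iff_eq hw.ne', weight]
    ring
  · obtain ⟨v, hv⟩ := exists_eq_least h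
    refine hasGap_of_notMem hn hε (v := v.1) ?_ ?_ v.2.2.2 ?_ ?_
    · have : (v.1 : ℕ) ≠ 0 := fun h => v.2.1 (Fin.ext (by simpa using h))
      omega
    · have := v.1.2
      have : (v.1 : ℕ) ≠ n := fun h => v.2.2.1 (Fin.ext (by simpa using h))
      omega
    · rintro ⟨j, hj, hjv⟩
      obtain rfl := Fin.ext hjv
      exact hj (by rw [spineGap_spine, hv, sub_self, zero_div])
    · rintro _ ⟨j, hj, rfl⟩
      exact mod_of_spineGap_ne_zero hmod h j hj

/-- The logarithmic coordinates of the full collapse of a gap vector. -/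
noncomputable def logCoord (g : Fin (n + 1) → ℝ) (v : Spine a n) : ℝ :=
  push (partialCollapse a n) g v / g (Fin.last n) + Real.log (g 0 / g (Fin.last n))

open Classical in
/-- `logCoord`, extended by `∞` where an end gap vanishes. -/
noncomputable def toOnePoint (g : gapSpace a n) : OnePoint (Spine a n → ℝ) :=
  if AtEnd g.1 then OnePoint.infty else ((logCoord g.1 : Spine a n → ℝ) : OnePoint _)

theorem not_atEnd_spineGap (hn : 0 < n) (h : Spine a n → ℝ) : ¬ AtEnd (spineGap h) := by
  have := weight_pos h
  have := Real.exp_pos (least h)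
  rw [AtEnd, spineGap_zero, spineGap_last hn, not_or]
  constructor <;> positivity

theorem logCoord_spineGap (hn : 0 < n) (hmod : n % a = 0 ∨ n % a = 1) (h : Spine a n → ℝ) :
    logCoord (spineGap h) = h := by
  funext v
  have hw := (weight_pos h).ne'
  rw [logCoord, push_eq_self fun i hi =>
    partialCollapse_eq_self n (mod_of_spineGap_ne_zero hmod h i hi),
    spineGap_zero, spineGap_last hn, spineGap_spine, div_div_div_cancel_right₀ hw,
    div_div_div_cancel_right₀ hw, div_one, div_one, Real.log_exp, sub_add_cancel]

theorem spineGap_logCoord (ha : 2 ≤ a) (hn : 0 < n) (hmod : n % a = 0 ∨ n % a = 1)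
    {g : Fin (n + 1) → ℝ} (hg : g ∈ gapSpace a n) (hend : ¬ AtEnd g) :
    spineGap (logCoord g : Spine a n → ℝ) = push (partialCollapse a n) g := by
  obtain ⟨h0, hl⟩ := not_or.1 hend
  replace h0 : 0 < g 0 := lt_of_le_of_ne (hg.1 0) (Ne.symm h0)
  replace hl : 0 < g (Fin.last n) := lt_of_le_of_ne (hg.1 _) (Ne.symm hl)
  have hr := push_partialCollapse_mem ha hg n
  set r := push (partialCollapse a n) g with hrdef
  have hr0 : r 0 = g 0 := push_partialCollapse_zero n g
  have hrl : r (Fin.last n) = g (Fin.last n) := push_partialCollapse_last hmod n g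
  have hsupp : ∀ j, r j ≠ 0 → (j : ℕ) % a = 0 ∨ (j : ℕ) % a = 1 := by
    intro j hj
    obtain ⟨_, ⟨i, -, rfl⟩, hi⟩ := support_push_subset ⟨j, hj, rfl⟩
    rw [← hi, partialCollapse, if_pos (by omega)]
    exact collapse_mod ha i
  obtain ⟨v₀, hv₀⟩ : ∃ v : Spine a n, r v = 0 := by
    obtain ⟨w, h1, h2, h3⟩ := hr.2.2
    obtain ⟨v, hv1, hv2, hv3⟩ := exists_mod_mem_window ha w
    have hvn : v < n + 1 := by omega
    refine ⟨⟨⟨v, hvn⟩, fun h => ?_, fun h => ?_, hv3⟩, ?_⟩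
    · simp [Fin.ext_iff] at h
      omega
    · simp [Fin.ext_iff] at h
      omega
    · by_contra h
      have := h3 v ⟨_, h, rfl⟩ hv1
      omega
  have hcoord (v : Spine a n) :
      logCoord g v = r v / g (Fin.last n) + Real.log (g 0 / g (Fin.last n)) := rfl
  have hleast : least (logCoord g : Spine a n → ℝ) = Real.log (g 0 / g (Fin.last n)) := by
    refine le_antisymm ?_ ?_
    · refine (least_le _ v₀).trans_eq ?_
      rw [hcoord, hv₀, zero_div, zero_add]
    · obtain ⟨v, hv⟩ := exists_eq_least (logCoord g : Spine a n → ℝ)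
      rw [← hv, hcoord]
      exact le_add_of_nonneg_left (div_nonneg (hr.1 _) hl.le)
  have hweight : weight (logCoord g : Spine a n → ℝ) = 1 / g (Fin.last n) := by
    have hsum := hr.2.1
    rw [sum_eq_of_support_spine hn hsupp, hr0, hrl] at hsum
    rw [weight, hleast, Real.exp_log (div_pos h0 hl)]
    simp only [hcoord, add_sub_cancel_right]
    rw [← Finset.sum_div, eq_div_iff hl.ne']
    field_simp
    linarith
  funext j
  unfold spineGap
  split_ifs with hj0 hjl hj
  · rw [hj0, hr0, hleast, hweight, Real.exp_log (div_pos h0 hl)]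
    field_simp
  · rw [hjl, hrl, hweight]
    field_simp
  · rw [hcoord, hleast, hweight]
    field_simp
    ring
  · by_contra h
    exact hj ⟨hj0, hjl, hsupp j fun h' => h h'.symm⟩

theorem toOnePoint_spineGap (hn : 0 < n) (hmod : n % a = 0 ∨ n % a = 1) (h : Spine a n → ℝ)
    (hmem : spineGap h ∈ gapSpace a n) : toOnePoint ⟨spineGap h, hmem⟩ = (h : OnePoint _) := by
  rw [toOnePoint, if_neg (not_atEnd_spineGap hn h), logCoord_spineGap hn hmod]

theorem continuous_toOnePoint (ha : 2 ≤ a) (hn : n = a * (m + 1) + ε) (hε : ε = 0 ∨ ε = 1) :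
    Continuous (toOnePoint : gapSpace a n → OnePoint (Spine a n → ℝ)) := by
  have hpos : 0 < n := by rw [hn]; positivity
  have hmod : n % a = 0 ∨ n % a = 1 := by
    rw [hn, Nat.mul_add_mod, Nat.mod_eq_of_lt (by omega)]
    exact hε
  have hc (j : Fin (n + 1)) : Continuous fun g : gapSpace a n => g.1 j :=
    (continuous_apply j).comp continuous_subtype_val
  have hend : IsOpen {g : gapSpace a n | ¬ AtEnd g.1} :=
    ((isClosed_eq (hc 0) continuous_const).union
      (isClosed_eq (hc (Fin.last n)) continuous_const)).isOpen_compl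
  have hlog : ContinuousOn (fun g : gapSpace a n => (logCoord g.1 : Spine a n → ℝ))
      {g | ¬ AtEnd g.1} := by
    refine continuousOn_pi.2 fun v => ?_
    have h0 : ∀ g ∈ {g : gapSpace a n | ¬ AtEnd g.1}, g.1 0 ≠ 0 := fun g hg => (not_or.1 hg).1
    have hl : ∀ g ∈ {g : gapSpace a n | ¬ AtEnd g.1}, g.1 (Fin.last n) ≠ 0 :=
      fun g hg => (not_or.1 hg).2
    have hp : Continuous fun g : gapSpace a n => push (partialCollapse a n) g.1 v.1 :=
      (continuous_apply v.1).comp ((continuous_push _).comp continuous_subtype_val)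
    exact (hp.continuousOn.div (hc _).continuousOn hl).add
      (((hc 0).continuousOn.div (hc _).continuousOn hl).log
        fun g hg => div_ne_zero (h0 g hg) (hl g hg))
  refine continuous_iff_isClosed.2 fun C hC => ?_
  by_cases hinf : OnePoint.infty ∈ C
  · rw [OnePoint.isClosed_iff_of_mem hinf] at hC
    have : (toOnePoint ⁻¹' C : Set (gapSpace a n)) =
        ({g | ¬ AtEnd g.1} ∩
          (fun g => (logCoord g.1 : Spine a n → ℝ)) ⁻¹' (OnePoint.some ⁻¹' C)ᶜ)ᶜ := by
      ext g
      by_cases hg : AtEnd g.1 <;> simp [toOnePoint, hg, hinf]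
    rw [this]
    exact (hlog.isOpen_inter_preimage hend hC.isOpen_compl).isClosed_compl
  · rw [OnePoint.isClosed_iff_of_notMem hinf] at hC
    have : (toOnePoint ⁻¹' C : Set (gapSpace a n)) =
        (fun g => push (partialCollapse a n) g.1) ⁻¹' (spineGap '' (OnePoint.some ⁻¹' C)) := by
      ext g
      constructor
      · intro hg
        have hng : ¬ AtEnd g.1 := fun h => hinf (by simpa [toOnePoint, h] using hg)
        refine ⟨logCoord g.1, ?_, spineGap_logCoord ha hpos hmod g.2 hng⟩
        simpa [toOnePoint, hng] using hg
      · rintro ⟨h, hh, he⟩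
        change spineGap h = push (partialCollapse a n) g.1 at he
        have hng : ¬ AtEnd g.1 := by
          rw [← atEnd_collapseGap ha hmod n g]
          change ¬ AtEnd (push (partialCollapse a n) g.1)
          rw [← he]
          exact not_atEnd_spineGap hpos h
        have hlc : logCoord g.1 = h := by
          have := congrArg (logCoord (a := a))
            ((spineGap_logCoord ha hpos hmod g.2 hng).trans he.symm)
          rwa [logCoord_spineGap hpos hmod, logCoord_spineGap hpos hmod] at this
        rw [Set.mem_preimage, toOnePoint, if_neg hng, hlc]
        exact hh
    rw [this]
    exact (hC.2.image continuous_spineGap).isClosed.preimage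
      ((continuous_push _).comp continuous_subtype_val)

end spine

open Topology in
/-- Collapsing the vectors with a vanishing end gap turns `gapSpace a n` into a space homotopy
equivalent to a sphere. -/
theorem homotopyEquiv_sphere_of_isQuotientMap_gapSpace {a n m ε : ℕ} (ha : 2 ≤ a)
    (hn : n = a * (m + 1) + ε) (hε : ε = 0 ∨ ε = 1) {S : Type*} [TopologicalSpace S]
    {π : gapSpace a n → S} (hq : IsQuotientMap π)
    (hπ : ∀ g g', π g = π g' ↔ g = g' ∨ (AtEnd g.1 ∧ AtEnd g'.1)) :
    Nonempty (ContinuousMap.HomotopyEquiv S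
      (Metric.sphere (0 : EuclideanSpace ℝ (Fin (2 * m + ε + 2))) 1)) := by
  have hpos : 0 < n := by rw [hn]; positivity
  have hmod : n % a = 0 ∨ n % a = 1 := by
    rw [hn, Nat.mul_add_mod, Nat.mod_eq_of_lt (by omega)]
    exact hε
  have hcard := card_spine ha hn hε
  have : Nonempty (Spine a n) := Fintype.card_pos_iff.1 (by omega)
  obtain ⟨b, hb⟩ : ∃ b : gapSpace a n, AtEnd b.1 := by
    have hone : (Pi.single 0 1 : Fin (n + 1) → ℝ) ∈ gapSpace a n := by
      refine ⟨fun i => ?_, by simp, 1, le_rfl, ?_, ?_⟩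
      · by_cases hi : i = 0
        · simp [hi]
        · simp [hi]
      · have : a * (m + 1) = a * m + a := by ring
        omega
      · rintro _ ⟨j, hj, rfl⟩ h1
        refine absurd (Pi.single_eq_of_ne ?_ 1) hj
        rintro rfl
        simp at h1
    refine ⟨⟨_, hone⟩, Or.inr (Pi.single_eq_of_ne ?_ 1)⟩
    intro h
    simp [Fin.ext_iff] at h
    omega
  have hf := continuous_toOnePoint ha hn hε
  have hfsurj : Function.Surjective
      (toOnePoint : gapSpace a n → OnePoint (Spine a n → ℝ)) := by
    intro y
    induction y using OnePoint.rec with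
    | infty => exact ⟨b, if_pos hb⟩
    | coe h => exact ⟨_, toOnePoint_spineGap hpos hmod h (spineGap_mem ha hn hε h)⟩
  have hfq := IsQuotientMap.of_surjective_continuous hfsurj hf
  have hfiber : ∀ g g' : gapSpace a n, π g = π g' → toOnePoint g = toOnePoint g' := by
    intro g g' h
    rcases (hπ g g').1 h with rfl | ⟨h1, h2⟩
    · rfl
    · rw [toOnePoint, toOnePoint, if_pos h1, if_pos h2]
  let F : C(S, OnePoint (Spine a n → ℝ)) := IsQuotientMap.lift (f := ⟨π, hq.continuous⟩) hq
    ⟨_, hf⟩ hfiber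
  have hF (g : gapSpace a n) : F (π g) = toOnePoint g :=
    DFunLike.congr_fun (IsQuotientMap.lift_comp (f := ⟨π, hq.continuous⟩) hq ⟨_, hf⟩ hfiber) g
  let G : OnePoint (Spine a n → ℝ) → S :=
    fun y => y.elim (π b) fun h => π ⟨spineGap h, spineGap_mem ha hn hε h⟩
  have hGf (g : gapSpace a n) : G (toOnePoint g) = π (collapseGap ha n g) := by
    by_cases hg : AtEnd g.1
    · rw [toOnePoint, if_pos hg]
      exact (hπ _ _).2 (Or.inr ⟨hb, (atEnd_collapseGap ha hmod n g).2 hg⟩)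
    · rw [toOnePoint, if_neg hg]
      exact congrArg π (Subtype.ext (spineGap_logCoord ha hpos hmod g.2 hg))
  have hG : Continuous G := by
    refine hfq.continuous_iff.2 ?_
    simp only [Function.comp_def, hGf]
    exact hq.continuous.comp (continuous_collapseGap ha n)
  obtain ⟨r, hr, hhom⟩ := exists_homotopic_id_collapseGap ha hmod hq hπ n
  have hGF : (⟨G, hG⟩ : C(_, S)).comp F = r := by
    ext s
    obtain ⟨g, rfl⟩ := hq.surjective s
    rw [ContinuousMap.comp_apply, hF, ContinuousMap.coe_mk, hGf, hr]
  have hFG : F.comp ⟨G, hG⟩ = ContinuousMap.id _ := by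
    ext y
    induction y using OnePoint.rec with
    | infty =>
      change F (π b) = _
      rw [hF, toOnePoint, if_pos hb, ContinuousMap.id_apply]
    | coe h =>
      change F (π _) = _
      rw [hF, toOnePoint_spineGap hpos hmod, ContinuousMap.id_apply]
  let E : ContinuousMap.HomotopyEquiv S (OnePoint (Spine a n → ℝ)) :=
    ⟨F, ⟨G, hG⟩, hGF ▸ hhom.symm, hFG ▸ ContinuousMap.Homotopic.refl _⟩
  exact ⟨E.trans (onePointEquivSphereOfFinrankEq (by simp [hcard])).toHomotopyEquiv⟩

section symProj

variable {n : ℕ} {X : Type} {star : X}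

theorem mk_permRel_eq_iff {y y' : Fin n → X} :
    Quot.mk (permRel n X) y = Quot.mk (permRel n X) y' ↔ ∃ σ : Equiv.Perm (Fin n), y ∘ σ = y' := by
  have heq : Equivalence (permRel n X) :=
    { refl := fun y => ⟨1, rfl⟩
      symm := by
        rintro y _ ⟨σ, rfl⟩
        exact ⟨σ⁻¹, by funext i; simp⟩
      trans := by
        rintro y _ _ ⟨σ, rfl⟩ ⟨τ, rfl⟩
        exact ⟨σ * τ, rfl⟩ }
  refine ⟨fun h => ?_, fun h => Quot.sound h⟩
  exact heq.eqvGen_iff.1 (Quot.eqvGen_exact h)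

theorem exists_mk_eq_star_iff {y : Fin n → X} :
    (∃ y' : Fin n → X, Quot.mk (permRel n X) y = Quot.mk (permRel n X) y' ∧ ∃ i, y' i = star) ↔
      ∃ i, y i = star := by
  constructor
  · rintro ⟨y', h, i, hi⟩
    obtain ⟨σ, rfl⟩ := mk_permRel_eq_iff.1 h
    exact ⟨σ i, hi⟩
  · exact fun h => ⟨y, rfl, h⟩

variable [TopologicalSpace X]

theorem symProj_eq_iff {y y' : Fin n → X} :
    symProj n X star y = symProj n X star y' ↔
      (∃ σ : Equiv.Perm (Fin n), y ∘ σ = y') ∨ ((∃ i, y i = star) ∧ ∃ i, y' i = star) := by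
  have heq : Equivalence (infRel n X star) :=
    { refl := fun p => Or.inl rfl
      symm := by
        rintro p q (rfl | ⟨h1, h2⟩)
        · exact Or.inl rfl
        · exact Or.inr ⟨h2, h1⟩
      trans := by
        rintro p q r (rfl | ⟨h1, h2⟩) (rfl | ⟨h3, h4⟩)
        · exact Or.inl rfl
        · exact Or.inr ⟨h3, h4⟩
        · exact Or.inr ⟨h1, h2⟩
        · exact Or.inr ⟨h1, h4⟩ }
  have hiff : symProj n X star y = symProj n X star y' ↔
      infRel n X star (Quot.mk _ y) (Quot.mk _ y') :=
    ⟨fun h => heq.eqvGen_iff.1 (Quot.eqvGen_exact h), fun h => Quot.sound h⟩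
  exact hiff.trans
    (or_congr mk_permRel_eq_iff (and_congr exists_mk_eq_star_iff exists_mk_eq_star_iff))

theorem isQuotientMap_symProj (n : ℕ) (X : Type) [TopologicalSpace X] (star : X) :
    Topology.IsQuotientMap (symProj n X star) :=
  (isQuotientMap_quot_mk (r := infRel n X star)).comp (isQuotientMap_quot_mk (r := permRel n X))

theorem isClosedMap_symProj [T1Space X] : IsClosedMap (symProj n X star) := by
  intro C hC
  rw [← (isQuotientMap_symProj n X star).isClosed_preimage]
  have hstar : IsClosed {y : Fin n → X | ∃ i, y i = star} := by
    have : {y : Fin n → X | ∃ i, y i = star} = ⋃ i, {y | y i = star} := by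
      ext y
      simp
    rw [this]
    exact isClosed_iUnion_of_finite fun i => isClosed_singleton.preimage (continuous_apply i)
  have hperm : IsClosed (⋃ σ : Equiv.Perm (Fin n), {y : Fin n → X | y ∘ σ ∈ C}) :=
    isClosed_iUnion_of_finite fun σ =>
      hC.preimage (continuous_pi fun i => continuous_apply (σ i))
  by_cases hCs : ∃ y ∈ C, ∃ i, y i = star
  · have : symProj n X star ⁻¹' (symProj n X star '' C) =
        (⋃ σ : Equiv.Perm (Fin n), {y : Fin n → X | y ∘ σ ∈ C}) ∪ {y | ∃ i, y i = star} := by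
      ext y
      simp only [Set.mem_preimage, Set.mem_image, Set.mem_union, Set.mem_iUnion,
        Set.mem_ofPred_eq]
      constructor
      · rintro ⟨y', hy', h⟩
        rcases symProj_eq_iff.1 h.symm with ⟨σ, rfl⟩ | h
        · exact Or.inl ⟨σ, hy'⟩
        · exact Or.inr h.1
      · rintro (⟨σ, hσ⟩ | h)
        · exact ⟨_, hσ, (symProj_eq_iff.2 (Or.inl ⟨σ, rfl⟩)).symm⟩
        · obtain ⟨y', hy', h'⟩ := hCs
          exact ⟨y', hy', symProj_eq_iff.2 (Or.inr ⟨h', h⟩)⟩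
    rw [this]
    exact hperm.union hstar
  · have : symProj n X star ⁻¹' (symProj n X star '' C) =
        ⋃ σ : Equiv.Perm (Fin n), {y : Fin n → X | y ∘ σ ∈ C} := by
      ext y
      simp only [Set.mem_preimage, Set.mem_image, Set.mem_iUnion, Set.mem_ofPred_eq]
      constructor
      · rintro ⟨y', hy', h⟩
        rcases symProj_eq_iff.1 h.symm with ⟨σ, rfl⟩ | h
        · exact ⟨σ, hy'⟩
        · exact absurd ⟨y', hy', h.2⟩ hCs
      · rintro ⟨σ, hσ⟩
        exact ⟨_, hσ, (symProj_eq_iff.2 (Or.inl ⟨σ, rfl⟩)).symm⟩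
    rw [this]
    exact hperm

end symProj

/-- A multiset of size `a + l` has the shape `(a, 1^l)` up to merging iff it contains some
element at least `a` times. -/
theorem exists_eq_bind_replicate_iff {X : Type} {a l : ℕ} (y : Fin (a + l) → X) :
    (∃ x : Fin (1 + l) → X, Multiset.map y Finset.univ.val =
      (Finset.univ.val : Multiset (Fin (1 + l))).bind
        (fun i => Multiset.replicate (if (i : ℕ) < 1 then a else 1) (x i))) ↔
      ∃ z, Multiset.replicate a z ≤ Multiset.map y Finset.univ.val := by
  have hbind (x : Fin (1 + l) → X) : (Finset.univ.val : Multiset (Fin (1 + l))).bind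
      (fun i => Multiset.replicate (if (i : ℕ) < 1 then a else 1) (x i)) =
      Multiset.replicate a (x (Fin.castAdd l 0)) +
        Multiset.map (fun i => x (Fin.natAdd 1 i)) Finset.univ.val := by
    change ∑ i : Fin (1 + l), Multiset.replicate (if (i : ℕ) < 1 then a else 1) (x i) = _
    rw [Fin.sum_univ_add]
    congr 1
    · simp
    · simp only [Fin.val_natAdd, Nat.not_lt.2 (Nat.le_add_right 1 _), if_false,
        Multiset.replicate_one]
      exact Multiset.bind_singleton _ _
  simp only [hbind]
  constructor
  · rintro ⟨x, hx⟩
    exact ⟨_, hx ▸ Multiset.le_add_right _ _⟩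
  · rintro ⟨z, hz⟩
    obtain ⟨R, hR⟩ := Multiset.le_iff_exists_add.1 hz
    have hcard : R.toList.length = l := by
      have := congrArg Multiset.card hR
      simp at this
      simpa using this.symm
    subst hcard
    refine ⟨Fin.append (fun _ => z) R.toList.get, ?_⟩
    rw [hR]
    simp only [Fin.append_left, Fin.append_right, Fin.univ_val_map, List.ofFn_get,
      Multiset.coe_toList]

/-- A parametrization of the circle by arc length, starting at a given point. -/
theorem exists_circle_parametrization (star : Circle1) :
    ∃ c : ℝ → Circle1, Continuous c ∧ c 0 = star ∧ Function.Surjective c ∧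
      ∀ s t, c s = c t ↔ ∃ k : ℤ, s = t + k := by
  let L := Complex.orthonormalBasisOneI.repr
  let e : Circle ≃ₜ Circle1 :=
    { toFun := fun z => ⟨L z, by simp [Circle.norm_coe]⟩
      invFun := fun x => ⟨L.symm x, mem_sphere_zero_iff_norm.2 (by simp)⟩
      left_inv := fun z => by ext; simp
      right_inv := fun x => by ext; simp
      continuous_toFun := by fun_prop
      continuous_invFun := by fun_prop }
  refine ⟨fun t => e (e.symm star * Circle.exp (2 * Real.pi * t)), by fun_prop, by simp, ?_, ?_⟩
  · intro x
    obtain ⟨t, ht⟩ := Circle.exp_surjective ((e.symm star)⁻¹ * e.symm x)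
    refine ⟨t / (2 * Real.pi), ?_⟩
    have : 2 * Real.pi * (t / (2 * Real.pi)) = t := by
      field_simp
    simp only [this, ht]
    simp
  · intro s t
    rw [e.injective.eq_iff, mul_right_inj, Circle.exp_eq_exp]
    refine exists_congr fun k => ?_
    have := Real.pi_pos
    constructor
    · intro h
      have : 2 * Real.pi * s = 2 * Real.pi * (t + k) := by linarith
      exact mul_left_cancel₀ (by positivity) this
    · rintro rfl
      ring

section cumulative

variable {a n : ℕ} {g g' : Fin (n + 1) → ℝ}

/-- The sum of the first `k` entries of a vector. -/
def cumul (g : Fin (n + 1) → ℝ) (k : ℕ) : ℝ :=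
  ∑ j ∈ Finset.range k, if h : j < n + 1 then g ⟨j, h⟩ else 0

theorem cumul_zero (g : Fin (n + 1) → ℝ) : cumul g 0 = 0 := rfl

theorem cumul_succ (g : Fin (n + 1) → ℝ) (j : Fin (n + 1)) :
    cumul g (j + 1) = cumul g j + g j := by
  rw [cumul, cumul, Finset.sum_range_succ, dif_pos j.2]

theorem cumul_last (g : Fin (n + 1) → ℝ) : cumul g (n + 1) = ∑ j, g j := by
  rw [cumul, Finset.sum_range]
  exact Finset.sum_congr rfl fun j _ => dif_pos j.2

theorem monotone_cumul (hg : ∀ i, 0 ≤ g i) : Monotone (cumul g) := by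
  refine monotone_nat_of_le_succ fun k => ?_
  rw [cumul, cumul, Finset.sum_range_succ]
  refine le_add_of_nonneg_right ?_
  split_ifs
  · exact hg _
  · exact le_rfl

theorem continuous_cumul (k : ℕ) : Continuous fun g : Fin (n + 1) → ℝ => cumul g k := by
  refine continuous_finsetSum _ fun j _ => ?_
  split_ifs
  · exact continuous_apply _
  · exact continuous_const

theorem eq_of_cumul_eq (h : ∀ k ≤ n + 1, cumul g k = cumul g' k) : g = g' := by
  funext j
  have h1 := h j (by omega)
  have h2 := h (j + 1) (by omega)
  rw [cumul_succ, cumul_succ] at h2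
  linarith

theorem cumul_nonneg (hg : ∀ i, 0 ≤ g i) (k : ℕ) : 0 ≤ cumul g k :=
  monotone_cumul hg (Nat.zero_le k)

theorem cumul_le_one (hg : g ∈ gapSpace a n) {k : ℕ} (hk : k ≤ n + 1) : cumul g k ≤ 1 :=
  (monotone_cumul hg.1 hk).trans_eq ((cumul_last g).trans hg.2.1)

/-- The ordered points with a given gap vector. -/
def gapPoints (g : Fin (n + 1) → ℝ) (i : Fin n) : ℝ := cumul g (i + 1)

theorem monotone_gapPoints (hg : ∀ i, 0 ≤ g i) : Monotone (gapPoints g) := fun i j hij =>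
  monotone_cumul hg (by simpa using hij)

theorem continuous_gapPoints : Continuous (gapPoints : (Fin (n + 1) → ℝ) → Fin n → ℝ) :=
  continuous_pi fun i => continuous_cumul (i + 1)

theorem eq_of_gapPoints_eq (hg : g ∈ gapSpace a n) (hg' : g' ∈ gapSpace a n)
    (h : gapPoints g = gapPoints g') : g = g' := by
  refine eq_of_cumul_eq fun k hk => ?_
  rcases k with _ | k
  · rfl
  · rcases Nat.lt_or_ge k n with hkn | hkn
    · exact congrFun h ⟨k, hkn⟩
    · obtain rfl : k = n := by omega
      rw [cumul_last, cumul_last, hg.2.1, hg'.2.1]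

theorem exists_gapPoints_eq_int_iff (hn : 0 < n) (hg : g ∈ gapSpace a n) :
    (∃ i, ∃ k : ℤ, gapPoints g i = k) ↔ AtEnd g := by
  constructor
  · rintro ⟨i, k, hk⟩
    have h0 : 0 ≤ gapPoints g i := cumul_nonneg hg.1 _
    have h1 : gapPoints g i ≤ 1 := cumul_le_one hg (by omega)
    rw [hk] at h0 h1
    have hk0 : 0 ≤ k := by exact_mod_cast h0
    have hk1 : k ≤ 1 := by exact_mod_cast h1
    obtain rfl | rfl : k = 0 ∨ k = 1 := by omega
    · left
      have h := monotone_cumul hg.1 (Nat.le_add_left 1 i)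
      have hs := cumul_succ g 0
      have : gapPoints g i = cumul g (i + 1) := rfl
      simp only [Fin.val_zero, zero_add, cumul_zero] at hs
      have := hg.1 0
      push_cast at hk
      linarith
    · right
      have h := monotone_cumul hg.1 (show (i : ℕ) + 1 ≤ n by omega)
      have hs := cumul_succ g (Fin.last n)
      have : gapPoints g i = cumul g (i + 1) := rfl
      rw [Fin.val_last, cumul_last, hg.2.1] at hs
      have := hg.1 (Fin.last n)
      push_cast at hk
      linarith
  · rintro (h | h)
    · refine ⟨⟨0, hn⟩, 0, ?_⟩
      have hs := cumul_succ g 0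
      simp only [Fin.val_zero, cumul_zero, h, add_zero] at hs
      simpa [gapPoints] using hs
    · refine ⟨⟨n - 1, by omega⟩, 1, ?_⟩
      have hs := cumul_succ g (Fin.last n)
      rw [Fin.val_last, cumul_last, hg.2.1, h, add_zero] at hs
      simp only [gapPoints, Nat.sub_add_cancel hn, ← hs, Int.cast_one]

theorem exists_card_gapPoints_eq (hg : g ∈ gapSpace a n) :
    ∃ z, a ≤ (Finset.univ.filter fun i => gapPoints g i = z).card := by
  obtain ⟨w, h1, h2, h3⟩ := hg.2.2
  have hconst : ∀ i < a, cumul g (w + i) = cumul g w := by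
    intro i
    induction i with
    | zero => exact fun _ => rfl
    | succ i ih =>
      intro hi
      have hlt : w + i < n + 1 := by omega
      have hz : g ⟨w + i, hlt⟩ = 0 := by
        by_contra h
        have := h3 (w + i) ⟨_, h, rfl⟩ (by omega)
        omega
      have := cumul_succ g ⟨w + i, hlt⟩
      rw [hz, add_zero] at this
      exact this.trans (ih (by omega))
  refine ⟨cumul g w, ?_⟩
  have hlt (i : Fin a) : w - 1 + i < n := by omega
  rw [← Finset.card_fin a]
  refine Finset.card_le_card_of_injOn (fun i => ⟨w - 1 + i, hlt i⟩) (fun i _ => ?_) ?_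
  · refine Finset.mem_coe.2 (Finset.mem_filter.2 ⟨Finset.mem_univ _, ?_⟩)
    exact (congrArg (cumul g) (show w - 1 + (i : ℕ) + 1 = w + i by omega)).trans (hconst i i.2)
  · intro i _ j _ hij
    simp only [Fin.mk.injEq] at hij
    exact Fin.ext (by omega)

/-- Every ordered tuple of points of the unit interval with `a` equal entries comes from
a gap vector. -/
theorem exists_gapPoints_eq {x : Fin n → ℝ} (hx : Monotone x) (h0 : ∀ i, 0 ≤ x i)
    (h1 : ∀ i, x i ≤ 1) {z : ℝ} (ha : 2 ≤ a)
    (hz : a ≤ (Finset.univ.filter fun i => x i = z).card) :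
    ∃ g ∈ gapSpace a n, gapPoints g = x := by
  let X : ℕ → ℝ := fun k =>
    if k = 0 then 0 else if h : k - 1 < n then x ⟨k - 1, h⟩ else 1
  have hX (i : Fin n) : X (i + 1) = x i := by simp [X]
  have hXlast : X (n + 1) = 1 := by simp [X]
  have hXmono : Monotone X := by
    refine monotone_nat_of_le_succ fun k => ?_
    rcases Nat.lt_or_ge k n with hk | hk
    · rw [hX ⟨k, hk⟩]
      rcases k with _ | k
      · exact h0 _
      · rw [hX ⟨k, by omega⟩]
        exact hx (Nat.le_succ k)
    · have htop : X (k + 1) = 1 := by simp [X, hk]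
      rw [htop]
      dsimp only [X]
      split_ifs
      exacts [zero_le_one, h1 _, le_rfl]
  have hcum : ∀ k ≤ n + 1, cumul (fun j : Fin (n + 1) => X (j + 1) - X j) k = X k := by
    intro k hk
    rw [cumul, Finset.sum_congr rfl (g := fun j => X (j + 1) - X j), Finset.sum_range_sub]
    · simp [X]
    · intro j hj
      rw [dif_pos ((Finset.mem_range.1 hj).trans_le hk)]
  refine ⟨fun j => X (j + 1) - X j, ⟨fun j => sub_nonneg.2 (hXmono (Nat.le_succ _)), ?_, ?_⟩, ?_⟩
  · rw [← cumul_last, hcum _ le_rfl, hXlast]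
  · set s := Finset.univ.filter fun i => x i = z with hs
    have hne : s.Nonempty := Finset.card_pos.1 (by omega)
    have hmin := (Finset.mem_filter.1 (s.min'_mem hne)).2
    have hmax := (Finset.mem_filter.1 (s.max'_mem hne)).2
    have hcard : s.card ≤ (s.max' hne : ℕ) + 1 - s.min' hne := by
      rw [← Fin.card_Icc]
      exact Finset.card_le_card fun i hi => Finset.mem_Icc.2 ⟨s.min'_le i hi, s.le_max' i hi⟩
    have hlt := (s.max' hne).2
    refine ⟨s.min' hne + 1, by omega, by omega, ?_⟩
    rintro _ ⟨j, hj, rfl⟩ hwj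
    by_contra hcon
    refine hj (sub_eq_zero.2 (le_antisymm ?_ (hXmono (Nat.le_succ _))))
    calc X (j + 1) ≤ X (s.max' hne + 1) := hXmono (by omega)
      _ = X (s.min' hne + 1) := by rw [hX, hX, hmin, hmax]
      _ ≤ X j := hXmono hwj
  · funext i
    rw [gapPoints, hcum _ (by omega), hX]

end cumulative

/-- The closed stratum of type `(a, 1^l)` of the circle is the quotient of the space of gap
vectors by the subspace of those with a vanishing end gap. -/
theorem exists_isQuotientMap_stratum {a l : ℕ} (ha : 2 ≤ a) (star : Circle1) :
    ∃ π : gapSpace a (a + l) → stratum (a + l) (1 + l) (fun i => if (i : ℕ) < 1 then a else 1)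
      Circle1 star, Topology.IsQuotientMap π ∧
      ∀ g g', π g = π g' ↔ g = g' ∨ (AtEnd g.1 ∧ AtEnd g'.1) := by
  classical
  obtain ⟨c, hc, hc0, hcs, hceq⟩ := exists_circle_parametrization star
  have hpos : 0 < a + l := by omega
  have hstar (g : gapSpace a (a + l)) : (∃ i, (c ∘ gapPoints g.1) i = star) ↔ AtEnd g.1 := by
    rw [← exists_gapPoints_eq_int_iff hpos g.2]
    refine exists_congr fun i => ?_
    rw [← hc0, Function.comp_apply, hceq]
    simp
  have hcount (y : Fin (a + l) → Circle1) (z : Circle1) :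
      Multiset.replicate a z ≤ Multiset.map y Finset.univ.val ↔
        a ≤ (Finset.univ.filter fun i => y i = z).card := by
    rw [← Multiset.le_count_iff_replicate_le, Multiset.count_map]
    simp only [eq_comm (a := z)]
    rfl
  let P : gapSpace a (a + l) → SymSmash (a + l) Circle1 star :=
    fun g => symProj (a + l) Circle1 star (c ∘ gapPoints g.1)
  have hPmem (g : gapSpace a (a + l)) : P g ∈
      stratum (a + l) (1 + l) (fun i => if (i : ℕ) < 1 then a else 1) Circle1 star := by
    refine ⟨_, rfl, (exists_eq_bind_replicate_iff _).2 ?_⟩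
    obtain ⟨z, hz⟩ := exists_card_gapPoints_eq g.2
    refine ⟨c z, (hcount _ _).2 (hz.trans (Finset.card_le_card ?_))⟩
    intro i hi
    simp only [Finset.mem_filter, Finset.mem_univ, true_and] at hi ⊢
    rw [Function.comp_apply, hi]
  have hcont : Continuous fun g : gapSpace a (a + l) => c ∘ gapPoints g.1 :=
    continuous_pi fun i =>
      hc.comp ((continuous_apply i).comp (continuous_gapPoints.comp continuous_subtype_val))
  have hPcont : Continuous P := (isQuotientMap_symProj _ _ _).continuous.comp hcont
  have hPclosed : IsClosedMap P := isClosedMap_symProj.comp hcont.isClosedMap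
  have hunit {s t : ℝ} (hs0 : 0 ≤ s) (hs1 : s < 1) (ht0 : 0 ≤ t) (ht1 : t < 1)
      (h : c s = c t) : s = t := by
    obtain ⟨k, hk⟩ := (hceq s t).1 h
    have h1 : (-1 : ℝ) < k := by linarith
    have h2 : (k : ℝ) < 1 := by linarith
    have h1' : -1 < k := by exact_mod_cast h1
    have h2' : k < 1 := by exact_mod_cast h2
    obtain rfl : k = 0 := by omega
    simpa using hk
  have hlt (g : gapSpace a (a + l)) (hg : ¬ AtEnd g.1) (i) : gapPoints g.1 i < 1 := by
    refine lt_of_le_of_ne (cumul_le_one g.2 (by omega)) fun h => hg ?_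
    exact (exists_gapPoints_eq_int_iff hpos g.2).1 ⟨i, 1, by simpa using h⟩
  have hfiber (g g' : gapSpace a (a + l)) :
      P g = P g' ↔ g = g' ∨ (AtEnd g.1 ∧ AtEnd g'.1) := by
    rw [← hstar g, ← hstar g']
    constructor
    · intro h
      rcases symProj_eq_iff.1 h with ⟨σ, hσ⟩ | h
      · by_cases hg : AtEnd g.1
        · right
          obtain ⟨i, hi⟩ := (hstar g).2 hg
          exact ⟨⟨i, hi⟩, σ.symm i, by rw [← hσ]; simpa using hi⟩
        · have hg' : ¬ AtEnd g'.1 := by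
            rw [← hstar g', ← hσ]
            rintro ⟨i, hi⟩
            exact hg ((hstar g).1 ⟨σ i, hi⟩)
          left
          have hx : gapPoints g.1 ∘ σ = gapPoints g'.1 := by
            funext i
            exact hunit (cumul_nonneg g.2.1 _) (hlt g hg _) (cumul_nonneg g'.2.1 _)
              (hlt g' hg' _) (congrFun hσ i)
          have hx' : gapPoints g.1 ∘ σ = gapPoints g.1 ∘ (1 : Equiv.Perm (Fin (a + l))) :=
            Tuple.unique_monotone (hx ▸ monotone_gapPoints g'.2.1) (monotone_gapPoints g.2.1)
          exact Subtype.ext (eq_of_gapPoints_eq g.2 g'.2 (hx'.symm.trans hx))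
      · exact Or.inr h
    · rintro (rfl | h)
      · rfl
      · exact symProj_eq_iff.2 (Or.inr h)
  have hsurj : ∀ p ∈ stratum (a + l) (1 + l) (fun i => if (i : ℕ) < 1 then a else 1)
      Circle1 star, ∃ g, P g = p := by
    rintro p ⟨y, rfl, hy⟩
    obtain ⟨z, hz⟩ := (exists_eq_bind_replicate_iff y).1 hy
    rw [hcount] at hz
    by_cases hys : ∃ i, y i = star
    · obtain ⟨g, hg, hgx⟩ := exists_gapPoints_eq (a := a) (n := a + l) (x := fun _ => (0 : ℝ))
        monotone_const (fun _ => le_rfl) (fun _ => zero_le_one) (z := 0) ha (by simp)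
      refine ⟨⟨g, hg⟩, symProj_eq_iff.2 (Or.inr ⟨⟨⟨0, hpos⟩, ?_⟩, hys⟩)⟩
      rw [Function.comp_apply, hgx, hc0]
    · choose t ht using fun i => hcs (y i)
      let θ : Fin (a + l) → ℝ := fun i => Int.fract (t i)
      have hθ (i) : c (θ i) = y i := by
        rw [← ht i, hceq]
        exact ⟨-⌊t i⌋, by simp [θ, Int.fract, sub_eq_add_neg]⟩
      have hne : (Finset.univ.filter fun i => y i = z).Nonempty := Finset.card_pos.1 (by omega)
      obtain ⟨i₀, hi₀⟩ := hne
      have hi₀ : y i₀ = z := by simpa using hi₀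
      obtain ⟨g, hg, hgx⟩ := exists_gapPoints_eq (a := a) (x := θ ∘ Tuple.sort θ)
        (Tuple.monotone_sort θ) (fun _ => Int.fract_nonneg _) (fun _ => (Int.fract_lt_one _).le)
        (z := θ i₀) ha (by
          refine hz.trans_eq (Finset.card_equiv (Tuple.sort θ).symm fun i => ?_)
          simp only [Finset.mem_filter, Finset.mem_univ, true_and, Function.comp_apply,
            Equiv.apply_symm_apply]
          rw [← hi₀, ← hθ, ← hθ]
          exact ⟨hunit (Int.fract_nonneg _) (Int.fract_lt_one _) (Int.fract_nonneg _)
            (Int.fract_lt_one _), fun h => by rw [h]⟩)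
      refine ⟨⟨g, hg⟩, (symProj_eq_iff.2 (Or.inl ⟨Tuple.sort θ, ?_⟩)).symm⟩
      funext i
      simp only [hgx, Function.comp_apply, hθ]
  refine ⟨Set.codRestrict P _ hPmem, ?_, fun g g' => ?_⟩
  · refine IsClosedMap.isQuotientMap (hPclosed.codRestrict hPmem) (hPcont.codRestrict hPmem) ?_
    rintro ⟨p, hp⟩
    obtain ⟨g, rfl⟩ := hsurj p hp
    exact ⟨g, rfl⟩
  · rw [← hfiber, Subtype.ext_iff]
    rfl

/-- for `l = a·m + ε` with `ε ∈ {0,1}`, the closed stratum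
`Σ_{(a,1^l)}` of `(S^1)^{(a+l)}` is homotopy equivalent to the sphere `S^{2m+ε+1}`. -/
theorem stratum_a_ones_sphere (a l m ε : ℕ)
    (ha : 2 ≤ a) (hl : 1 ≤ l) (hlme : l = a * m + ε) (hε : ε = 0 ∨ ε = 1)
    (star : Circle1) :
    Nonempty
      (ContinuousMap.HomotopyEquiv
        ↥(stratum (a + l) (1 + l)
          (fun i => if (i : ℕ) < 1 then a else 1) Circle1 star)
        ↥(Metric.sphere (0 : EuclideanSpace ℝ (Fin (2 * m + ε + 2))) 1)) := by
  obtain ⟨π, hq, hπ⟩ := exists_isQuotientMap_stratum (l := l) ha star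
  exact homotopyEquiv_sphere_of_isQuotientMap_gapSpace ha (by rw [hlme]; ring) hε hq hπ
end
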